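/- Uniqueness for the exterior impedance problem for Maxwell's equations (Lemma 1, stated for a ball): Let a > 0, let ω, ε₀, μ₀ be positive reals, set k = ω√(ε₀μ₀), and let ζ ∈ ℂ with Re ζ ≥ 0 and ζ ≠ 0. Suppose E, H : ℝ³ → ℂ³ are continuous on {x : |x| ≥ a}, continuously differentiable on {x : |x| > a}, and satisfy: (i) curl E = iωμ₀ H and curl H = −iωε₀ E on {|x| > a}; (ii) the impedance boundary condition N × (E × N) = ζ (N × H) at every point x with |x| = a, where N = x/a is the outward unit normal to the ball; (iii) the Sommerfeld radiation conditions: sup_{|x|=R} ‖R(∂E/∂r(x) − ik E(x))‖ → 0 and sup_{|x|=R} ‖R(∂H/∂r(x) − ik H(x))‖ → 0 as R → ∞, where ∂/∂r denotes the radial derivative (x/|x|)·∇. Then E = 0 and H = 0 on {x : |x| ≥ a}. -/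

import Mathlib

/- Uniqueness for the exterior impedance problem for Maxwell's equations
(Lemma 1 of the paper, stated for the exterior of a ball of radius a). -/

open MeasureTheory Complex

noncomputable section

/-- Points of physical space: ℝ³ with the Euclidean norm. -/
abbrev E3 := EuclideanSpace ℝ (Fin 3)

/-- Partial derivative of a complex-valued function on ℝ³ in the j-th coordinate direction. -/
def pdC (f : E3 → ℂ) (j : Fin 3) (x : E3) : ℂ :=
  fderiv ℝ f x (EuclideanSpace.single j (1 : ℝ))

/-- The curl of a vector field ℝ³ → ℂ³, defined componentwise:
(curl F)₁ = ∂₂F₃ − ∂₃F₂, (curl F)₂ = ∂₃F₁ − ∂₁F₃, (curl F)₃ = ∂₁F₂ − ∂₂F₁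
(indices 0,1,2 in Lean). -/
def curlC (F : E3 → Fin 3 → ℂ) : E3 → Fin 3 → ℂ := fun x =>
  ![pdC (fun y => F y 2) 1 x - pdC (fun y => F y 1) 2 x,
    pdC (fun y => F y 0) 2 x - pdC (fun y => F y 2) 0 x,
    pdC (fun y => F y 1) 0 x - pdC (fun y => F y 0) 1 x]

/-- Cross product of two vectors in ℂ³. -/
def crossC (A B : Fin 3 → ℂ) : Fin 3 → ℂ :=
  ![A 1 * B 2 - A 2 * B 1, A 2 * B 0 - A 0 * B 2, A 0 * B 1 - A 1 * B 0]

/-- Radial derivative of a field ℝ³ → ℂ³ at x ≠ 0: the directional derivative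
in the direction x/|x|. -/
def radialDeriv (F : E3 → Fin 3 → ℂ) (x : E3) : Fin 3 → ℂ :=
  fderiv ℝ F x (‖x‖⁻¹ • x)

/-- The integral of `x ↦ f (r x)` over the unit sphere. -/
def sphInt (r : ℝ) (f : E3 → ℂ) : ℂ :=
  ∫ θ : Metric.sphere (0 : E3) 1, f (r • (θ : E3)) ∂(volume : Measure E3).toSphere

lemma norm_smul_sphere {r : ℝ} (hr : 0 ≤ r) (θ : Metric.sphere (0 : E3) 1) :
    ‖r • (θ : E3)‖ = r := by
  rw [norm_smul, Real.norm_of_nonneg hr, norm_eq_of_mem_sphere, mul_one]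

lemma continuous_comp_smul_sphere {J : Set ℝ} {F : Type*} [TopologicalSpace F] {f : E3 → F}
    (hf : ContinuousOn f {x | ‖x‖ ∈ J}) {r : ℝ} (hr : 0 ≤ r) (hrJ : r ∈ J) :
    Continuous fun θ : Metric.sphere (0 : E3) 1 => f (r • (θ : E3)) := by
  refine hf.comp_continuous (by fun_prop) fun θ => ?_
  simpa [norm_smul_sphere hr] using hrJ

lemma integrable_sphere {F : Type*} [NormedAddCommGroup F]
    {f : Metric.sphere (0 : E3) 1 → F} (hf : Continuous f) :
    Integrable f (volume : Measure E3).toSphere :=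
  hf.integrable_of_hasCompactSupport (HasCompactSupport.of_compactSpace _)

lemma continuousOn_sphInt {J : Set ℝ} (hJ : ∀ r ∈ J, 0 ≤ r) {f : E3 → ℂ}
    (hf : ContinuousOn f {x | ‖x‖ ∈ J}) : ContinuousOn (fun r => sphInt r f) J := by
  refine continuousOn_integral_of_compact_support (k := Set.univ) isCompact_univ ?_ (by simp)
  refine hf.comp (by fun_prop) ?_
  rintro ⟨r, θ⟩ ⟨hr, -⟩
  simpa [norm_smul_sphere (hJ r hr)] using hr

lemma hasDerivAt_integral_of_compactSpace {K : Type*} [TopologicalSpace K] [CompactSpace K]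
    [SecondCountableTopology K] [MeasurableSpace K] [BorelSpace K]
    (μ : Measure K) [IsFiniteMeasure μ] {g g' : ℝ → K → ℂ} {V : Set ℝ} {t : ℝ}
    (hV : IsOpen V) (ht : t ∈ V) (hg : ∀ s ∈ V, ∀ θ, HasDerivAt (fun s => g s θ) (g' s θ) s)
    (hgc : ∀ s ∈ V, Continuous (g s)) (hg' : ContinuousOn (Function.uncurry g') (V ×ˢ Set.univ)) :
    HasDerivAt (fun s => ∫ θ, g s θ ∂μ) (∫ θ, g' t θ ∂μ) t := by
  obtain ⟨δ, hδ, hδV⟩ := Metric.nhds_basis_closedBall.mem_iff.1 (hV.mem_nhds ht)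
  obtain ⟨M, hM⟩ := (((isCompact_closedBall t δ).prod (isCompact_univ (X := K))).bddAbove_image
    (hg'.norm.mono (Set.prod_mono hδV le_rfl)))
  have hc : Continuous (g' t) := by
    have := hg'.comp_continuous (f := fun θ : K => (t, θ)) (by fun_prop) (by simp [ht])
    exact this
  refine (hasDerivAt_integral_of_dominated_loc_of_deriv_le (bound := fun _ => M)
    (Metric.closedBall_mem_nhds t hδ) ?_ ?_ ?_ ?_ (integrable_const M) ?_).2
  · filter_upwards [hV.mem_nhds ht] with s hs using (hgc s hs).aestronglyMeasurable
  · exact (hgc t ht).integrable_of_hasCompactSupport (HasCompactSupport.of_compactSpace _)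
  · exact hc.aestronglyMeasurable
  · refine .of_forall fun θ s hs => hM ⟨(s, θ), ⟨hs, trivial⟩, rfl⟩
  · exact .of_forall fun θ s hs => hg s (hδV hs) θ

lemma fderiv_eq_sum_pdC (f : E3 → ℂ) (x v : E3) :
    fderiv ℝ f x v = ∑ i, (v i : ℂ) * pdC f i x := by
  conv_lhs => rw [← (EuclideanSpace.basisFun (Fin 3) ℝ).sum_repr v]
  simp [pdC, map_sum]

lemma isOpen_norm_mem {I : Set ℝ} (hI : IsOpen I) : IsOpen {x : E3 | ‖x‖ ∈ I} :=
  hI.preimage continuous_norm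

lemma hasDerivAt_sphInt {I : Set ℝ} (hI : IsOpen I) {f : E3 → ℂ}
    (hf : ContDiffOn ℝ 1 f {x | ‖x‖ ∈ I}) {r : ℝ} (hr : 0 < r) (hrI : r ∈ I) :
    HasDerivAt (fun s => sphInt s f) ((r : ℂ)⁻¹ * sphInt r fun x => ∑ i, (x i : ℂ) * pdC f i x)
      r := by
  have hU := isOpen_norm_mem hI
  have hV : IsOpen (I ∩ Set.Ioi 0) := hI.inter isOpen_Ioi
  have hmem : ∀ s ∈ I ∩ Set.Ioi 0, ∀ θ : Metric.sphere (0 : E3) 1,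
      s • (θ : E3) ∈ {x : E3 | ‖x‖ ∈ I} := by
    intro s hs θ
    simpa [norm_smul_sphere (le_of_lt hs.2)] using hs.1
  have key := hasDerivAt_integral_of_compactSpace (volume : Measure E3).toSphere
    (g := fun s (θ : Metric.sphere (0 : E3) 1) => f (s • (θ : E3)))
    (g' := fun s (θ : Metric.sphere (0 : E3) 1) => fderiv ℝ f (s • (θ : E3)) θ)
    hV (⟨hrI, hr⟩ : r ∈ I ∩ Set.Ioi 0) ?_ ?_ ?_
  · convert! key using 1
    rw [sphInt, ← integral_const_mul]
    congr 1 with θ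
    rw [fderiv_eq_sum_pdC, Finset.mul_sum]
    refine Finset.sum_congr rfl fun i _ => ?_
    have : (r : ℂ) ≠ 0 := by exact_mod_cast hr.ne'
    simp only [PiLp.smul_apply, smul_eq_mul, ofReal_mul]
    field_simp
  · intro s hs θ
    have h1 := ((hf.differentiableOn one_ne_zero).differentiableAt
      (hU.mem_nhds (hmem s hs θ))).hasFDerivAt
    have h2 : HasDerivAt (fun s : ℝ => s • (θ : E3)) (θ : E3) s := by
      simpa using (hasDerivAt_id s).smul_const (θ : E3)
    exact h1.comp_hasDerivAt s h2
  · intro s hs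
    exact continuous_comp_smul_sphere hf.continuousOn hs.2.le hs.1
  · have h1 := hf.continuousOn_fderiv_of_isOpen hU le_rfl
    refine ContinuousOn.clm_apply (h1.comp (by fun_prop) ?_) (by fun_prop)
    rintro ⟨s, θ⟩ ⟨hs, -⟩
    exact hmem s hs θ

/-- The homeomorphism of the unit sphere induced by a linear isometry. -/
def sphereHomeo (e : E3 ≃ₗᵢ[ℝ] E3) : Metric.sphere (0 : E3) 1 ≃ₜ Metric.sphere (0 : E3) 1 where
  toFun θ := ⟨e θ, by simp⟩
  invFun θ := ⟨e.symm θ, by simp⟩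
  left_inv θ := by simp
  right_inv θ := by simp

open scoped Pointwise in
lemma measurePreserving_sphereHomeo (e : E3 ≃ₗᵢ[ℝ] E3) :
    MeasurePreserving (sphereHomeo e) (volume : Measure E3).toSphere
      (volume : Measure E3).toSphere := by
  refine ⟨(sphereHomeo e).continuous.measurable, ?_⟩
  ext s hs
  have hm := (sphereHomeo e).continuous.measurable
  rw [Measure.map_apply hm hs, Measure.toSphere_apply' _ (hm hs), Measure.toSphere_apply' _ hs]
  congr 1
  have : (Set.Ioo (0 : ℝ) 1 • (Subtype.val '' (sphereHomeo e ⁻¹' s)) : Set E3)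
      = e.toMeasurableEquiv ⁻¹' (Set.Ioo (0 : ℝ) 1 • (Subtype.val '' s)) := by
    ext x
    simp only [Set.mem_smul, Set.mem_image, Set.mem_preimage]
    constructor
    · rintro ⟨t, ht, _, ⟨θ, hθ, rfl⟩, rfl⟩
      exact ⟨t, ht, _, ⟨_, hθ, rfl⟩, by simp [sphereHomeo]⟩
    · rintro ⟨t, ht, _, ⟨θ, hθ, rfl⟩, h⟩
      refine ⟨t, ht, _, ⟨(sphereHomeo e).symm θ, by simpa using hθ, rfl⟩, ?_⟩
      apply e.injective
      rw [map_smul]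
      simpa [sphereHomeo] using h
  rw [this]
  exact e.measurePreserving.measure_preimage_equiv _

lemma sphInt_comp_linearIsometryEquiv (e : E3 ≃ₗᵢ[ℝ] E3) (r : ℝ) (f : E3 → ℂ) :
    sphInt r (fun x => f (e x)) = sphInt r f := by
  have := (measurePreserving_sphereHomeo e).integral_comp
    (sphereHomeo e).measurableEmbedding (fun θ => f (r • (θ : E3)))
  simpa [sphereHomeo, sphInt] using this

/-- Rotational fields integrate to zero over spheres. -/
lemma sphInt_fderiv_skew {I : Set ℝ} (hI : IsOpen I) {f : E3 → ℂ}
    (hf : ContDiffOn ℝ 1 f {x | ‖x‖ ∈ I}) {r : ℝ} (hr : 0 < r) (hrI : r ∈ I)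
    {A : E3 →L[ℝ] E3} (hA : A ∈ skewAdjoint (E3 →L[ℝ] E3)) :
    sphInt r (fun x => fderiv ℝ f x (A x)) = 0 := by
  have hU := isOpen_norm_mem hI
  have hexp : ∀ t : ℝ, ∃ e : E3 ≃ₗᵢ[ℝ] E3, ∀ x, e x = NormedSpace.exp (t • A) x := by
    intro t
    let _ : NormedAlgebra ℚ (E3 →L[ℝ] E3) := NormedAlgebra.restrictScalars ℚ ℝ (E3 →L[ℝ] E3)
    have : NormedSpace.exp (t • A) ∈ unitary (E3 →L[ℝ] E3) :=
      NormedSpace.exp_mem_unitary_of_mem_skewAdjoint (skewAdjoint.smul_mem t hA)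
    exact ⟨Unitary.linearIsometryEquiv ⟨_, this⟩, fun x => rfl⟩
  have hder : ∀ t : ℝ, HasDerivAt (fun t : ℝ => NormedSpace.exp (t • A))
      (A * NormedSpace.exp (t • A)) t := fun t => hasDerivAt_exp_smul_const' A t
  have hcexp : Continuous fun t : ℝ => NormedSpace.exp (t • A) :=
    continuous_iff_continuousAt.2 fun t => (hder t).continuousAt
  have hmem : ∀ t : ℝ, ∀ θ : Metric.sphere (0 : E3) 1,
      NormedSpace.exp (t • A) (r • (θ : E3)) ∈ {x : E3 | ‖x‖ ∈ I} := by
    intro t θ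
    obtain ⟨e, he⟩ := hexp t
    rw [← he]
    simpa only [Set.mem_ofPred_eq, e.norm_map, norm_smul_sphere hr.le] using hrI
  have key := hasDerivAt_integral_of_compactSpace (volume : Measure E3).toSphere
    (g := fun t (θ : Metric.sphere (0 : E3) 1) => f (NormedSpace.exp (t • A) (r • (θ : E3))))
    (g' := fun t (θ : Metric.sphere (0 : E3) 1) =>
      fderiv ℝ f (NormedSpace.exp (t • A) (r • (θ : E3)))
        (A (NormedSpace.exp (t • A) (r • (θ : E3)))))
    isOpen_univ (Set.mem_univ (0 : ℝ)) ?_ ?_ ?_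
  · have hconst : ∀ t : ℝ, (∫ θ : Metric.sphere (0 : E3) 1,
        f (NormedSpace.exp (t • A) (r • (θ : E3))) ∂(volume : Measure E3).toSphere)
          = sphInt r f := by
      intro t
      obtain ⟨e, he⟩ := hexp t
      rw [← sphInt_comp_linearIsometryEquiv e, sphInt]
      simp_rw [he]
    simp_rw [hconst] at key
    have := key.unique (hasDerivAt_const _ _)
    have h0 : NormedSpace.exp ((0 : ℝ) • A) = 1 :=
      (congrArg NormedSpace.exp (zero_smul ℝ A)).trans NormedSpace.exp_zero
    have h1 : ∀ x : E3, (1 : E3 →L[ℝ] E3) x = x := fun _ => rfl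
    simpa only [sphInt, h0, h1] using this
  · intro t _ θ
    have h1 := ((hf.differentiableOn one_ne_zero).differentiableAt
      (hU.mem_nhds (hmem t θ))).hasFDerivAt
    have h2 : HasDerivAt (fun t : ℝ => NormedSpace.exp (t • A) (r • (θ : E3)))
        (A (NormedSpace.exp (t • A) (r • (θ : E3)))) t := by
      simpa using (hder t).clm_apply (hasDerivAt_const t (r • (θ : E3)))
    exact h1.comp_hasDerivAt t h2
  · intro t _
    exact hf.continuousOn.comp_continuous (by fun_prop) (hmem t)
  · have h1 := hf.continuousOn_fderiv_of_isOpen hU le_rfl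
    have h2 : Continuous fun q : ℝ × Metric.sphere (0 : E3) 1 =>
        NormedSpace.exp (q.1 • A) (r • (q.2 : E3)) :=
      (hcexp.comp continuous_fst).clm_apply (by fun_prop)
    refine ContinuousOn.clm_apply (h1.comp h2.continuousOn ?_)
      (A.continuous.comp h2).continuousOn
    rintro ⟨t, θ⟩ -
    exact hmem t θ

lemma sphInt_angular {I : Set ℝ} (hI : IsOpen I) {f : E3 → ℂ}
    (hf : ContDiffOn ℝ 1 f {x | ‖x‖ ∈ I}) {r : ℝ} (hr : 0 < r) (hrI : r ∈ I) (i j : Fin 3) :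
    sphInt r (fun x => (x i : ℂ) * pdC f j x - (x j : ℂ) * pdC f i x) = 0 := by
  let P (i : Fin 3) : E3 →L[ℝ] ℝ := EuclideanSpace.proj i
  let A : E3 →L[ℝ] E3 := (P i).smulRight (EuclideanSpace.single j (1 : ℝ))
    - (P j).smulRight (EuclideanSpace.single i (1 : ℝ))
  have hA : A ∈ skewAdjoint (E3 →L[ℝ] E3) := by
    rw [skewAdjoint.mem_iff, ContinuousLinearMap.star_eq_adjoint, eq_comm,
      ContinuousLinearMap.eq_adjoint_iff]
    intro x y
    simp only [A, P, neg_apply, sub_apply,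
      ContinuousLinearMap.smulRight_apply, inner_neg_left,
      inner_sub_left, inner_sub_right, inner_smul_left, inner_smul_right,
      EuclideanSpace.inner_single_left, EuclideanSpace.inner_single_right]
    simp
    ring
  rw [← sphInt_fderiv_skew hI hf hr hrI hA]
  congr 1 with x
  simp [A, P, pdC]

lemma sphInt_congr {f g : E3 → ℂ} {r : ℝ} (hr : 0 ≤ r) (h : ∀ x : E3, ‖x‖ = r → f x = g x) :
    sphInt r f = sphInt r g := by
  unfold sphInt
  congr 1 with θ
  exact h _ (norm_smul_sphere hr θ)

lemma sphInt_const_mul (c : ℂ) (f : E3 → ℂ) (r : ℝ) :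
    sphInt r (fun x => c * f x) = c * sphInt r f :=
  integral_const_mul _ _

lemma sphInt_conj (f : E3 → ℂ) (r : ℝ) :
    sphInt r (fun x => (starRingEnd ℂ) (f x)) = (starRingEnd ℂ) (sphInt r f) :=
  integral_conj

lemma sphInt_add {J : Set ℝ} {f g : E3 → ℂ} (hf : ContinuousOn f {x | ‖x‖ ∈ J})
    (hg : ContinuousOn g {x | ‖x‖ ∈ J}) {r : ℝ} (hr : 0 ≤ r) (hrJ : r ∈ J) :
    sphInt r (fun x => f x + g x) = sphInt r f + sphInt r g :=
  integral_add (integrable_sphere (continuous_comp_smul_sphere hf hr hrJ))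
    (integrable_sphere (continuous_comp_smul_sphere hg hr hrJ))

lemma sphInt_sum {ι : Type*} (s : Finset ι) {J : Set ℝ} {f : ι → E3 → ℂ}
    (hf : ∀ i, ContinuousOn (f i) {x | ‖x‖ ∈ J}) {r : ℝ} (hr : 0 ≤ r) (hrJ : r ∈ J) :
    sphInt r (fun x => ∑ i ∈ s, f i x) = ∑ i ∈ s, sphInt r (f i) :=
  integral_finsetSum _ fun i _ => integrable_sphere (continuous_comp_smul_sphere (hf i) hr hrJ)

lemma continuousOn_pdC {I : Set ℝ} (hI : IsOpen I) {f : E3 → ℂ}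
    (hf : ContDiffOn ℝ 1 f {x | ‖x‖ ∈ I}) (j : Fin 3) :
    ContinuousOn (pdC f j) {x | ‖x‖ ∈ I} :=
  (hf.continuousOn_fderiv_of_isOpen (isOpen_norm_mem hI) le_rfl).clm_apply continuousOn_const

lemma differentiableAt_of_norm_mem {I : Set ℝ} (hI : IsOpen I) {F : Type*} [NormedAddCommGroup F]
    [NormedSpace ℝ F] {f : E3 → F}
    (hf : ContDiffOn ℝ 1 f {x | ‖x‖ ∈ I}) {x : E3} (hx : ‖x‖ ∈ I) : DifferentiableAt ℝ f x :=
  (hf.differentiableOn one_ne_zero).differentiableAt ((isOpen_norm_mem hI).mem_nhds hx)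

lemma continuous_coord (i : Fin 3) : Continuous fun x : E3 => (x i : ℂ) := by fun_prop

lemma contDiff_coord (i : Fin 3) {n : WithTop ℕ∞} : ContDiff ℝ n fun x : E3 => (x i : ℂ) :=
  (ofRealCLM.comp (EuclideanSpace.proj i : E3 →L[ℝ] ℝ)).contDiff

lemma pdC_coord (i j : Fin 3) (x : E3) :
    pdC (fun y => (y i : ℂ)) j x = if i = j then 1 else 0 := by
  have : fderiv ℝ (fun y : E3 => (y i : ℂ)) x
      = ofRealCLM.comp (EuclideanSpace.proj i : E3 →L[ℝ] ℝ) :=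
    (ofRealCLM.comp (EuclideanSpace.proj i : E3 →L[ℝ] ℝ)).hasFDerivAt.fderiv
  rw [pdC, this]
  split_ifs with h <;> simp [h]

lemma pdC_add {f g : E3 → ℂ} {x : E3} (hf : DifferentiableAt ℝ f x)
    (hg : DifferentiableAt ℝ g x) (j : Fin 3) :
    pdC (fun y => f y + g y) j x = pdC f j x + pdC g j x := by
  rw [pdC, fderiv_fun_add hf hg]; rfl

lemma pdC_sub {f g : E3 → ℂ} {x : E3} (hf : DifferentiableAt ℝ f x)
    (hg : DifferentiableAt ℝ g x) (j : Fin 3) :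
    pdC (fun y => f y - g y) j x = pdC f j x - pdC g j x := by
  rw [pdC, fderiv_fun_sub hf hg]; rfl

lemma pdC_neg {f : E3 → ℂ} {x : E3} (j : Fin 3) :
    pdC (fun y => - f y) j x = - pdC f j x := by
  rw [pdC, fderiv_fun_neg]; rfl

lemma pdC_mul {f g : E3 → ℂ} {x : E3} (hf : DifferentiableAt ℝ f x)
    (hg : DifferentiableAt ℝ g x) (j : Fin 3) :
    pdC (fun y => f y * g y) j x = f x * pdC g j x + g x * pdC f j x := by
  rw [pdC, fderiv_fun_mul hf hg]; rfl

lemma pdC_const_mul {f : E3 → ℂ} {x : E3} (hf : DifferentiableAt ℝ f x) (c : ℂ) (j : Fin 3) :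
    pdC (fun y => c * f y) j x = c * pdC f j x := by
  rw [pdC, fderiv_const_mul hf]; rfl

lemma pdC_conj {f : E3 → ℂ} {x : E3} (hf : DifferentiableAt ℝ f x) (j : Fin 3) :
    pdC (fun y => (starRingEnd ℂ) (f y)) j x = (starRingEnd ℂ) (pdC f j x) := by
  have := (conjCLE : ℂ →L[ℝ] ℂ).hasFDerivAt.comp x hf.hasFDerivAt
  rw [pdC, show (fun y => (starRingEnd ℂ) (f y)) = (conjCLE : ℂ →L[ℝ] ℂ) ∘ f from rfl,
    this.fderiv]
  simp [pdC]

lemma pdC_sum {ι : Type*} (s : Finset ι) {f : ι → E3 → ℂ} {x : E3}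
    (hf : ∀ i, DifferentiableAt ℝ (f i) x) (j : Fin 3) :
    pdC (fun y => ∑ i ∈ s, f i y) j x = ∑ i ∈ s, pdC (f i) j x := by
  rw [pdC, fderiv_fun_sum fun i _ => hf i]
  simp [pdC]

lemma pdC_coord_mul {f : E3 → ℂ} {x : E3} (hf : DifferentiableAt ℝ f x) (i j : Fin 3) :
    pdC (fun y => (y i : ℂ) * f y) j x = (x i : ℂ) * pdC f j x + if i = j then f x else 0 := by
  rw [pdC_mul ((contDiff_coord i).differentiable one_ne_zero x) hf, pdC_coord]
  simp

lemma sphInt_angular_sum {I : Set ℝ} (hI : IsOpen I) {G : Fin 3 → Fin 3 → E3 → ℂ}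
    (hG : ∀ i j, ContDiffOn ℝ 1 (G i j) {x | ‖x‖ ∈ I}) {r : ℝ} (hr : 0 < r) (hrI : r ∈ I) :
    sphInt r (fun x => ∑ i, ∑ j,
      ((x i : ℂ) * pdC (G i j) j x - (x j : ℂ) * pdC (G i j) i x)) = 0 := by
  have hc : ∀ i j, ContinuousOn (fun x : E3 =>
      ((x i : ℂ) * pdC (G i j) j x - (x j : ℂ) * pdC (G i j) i x)) {x | ‖x‖ ∈ I} := fun i j =>
    ((continuous_coord i).continuousOn.mul (continuousOn_pdC hI (hG i j) j)).sub
      ((continuous_coord j).continuousOn.mul (continuousOn_pdC hI (hG i j) i))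
  rw [sphInt_sum _ (fun i => continuousOn_finsetSum _ fun j _ => hc i j) hr.le hrI]
  refine Finset.sum_eq_zero fun i _ => ?_
  rw [sphInt_sum _ (hc i) hr.le hrI]
  exact Finset.sum_eq_zero fun j _ => sphInt_angular hI (hG i j) hr hrI i j

lemma norm_sq_eq_sum_coord (x : E3) :
    ((‖x‖ : ℂ)) ^ 2 = (x 0 : ℂ) ^ 2 + (x 1 : ℂ) ^ 2 + (x 2 : ℂ) ^ 2 := by
  have : ‖x‖ ^ 2 = x 0 ^ 2 + x 1 ^ 2 + x 2 ^ 2 := by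
    rw [EuclideanSpace.real_norm_sq_eq, Fin.sum_univ_three]
  exact_mod_cast this

/-- The divergence theorem on spherical shells, in differential form. -/
lemma hasDerivAt_flux {I : Set ℝ} (hI : IsOpen I) {F : Fin 3 → E3 → ℂ}
    (hF : ∀ i, ContDiffOn ℝ 1 (F i) {x | ‖x‖ ∈ I}) {r : ℝ} (hr : 0 < r) (hrI : r ∈ I) :
    HasDerivAt (fun s : ℝ => (s : ℂ) * sphInt s fun x => ∑ i, (x i : ℂ) * F i x)
      ((r : ℂ) ^ 2 * sphInt r fun x => ∑ i, pdC (F i) i x) r := by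
  have hcF : ∀ i j, ContDiffOn ℝ 1 (fun x : E3 => (x j : ℂ) * F i x) {x | ‖x‖ ∈ I} := fun i j =>
    (contDiff_coord j).contDiffOn.mul (hF i)
  have hf : ContDiffOn ℝ 1 (fun x : E3 => ∑ i, (x i : ℂ) * F i x) {x | ‖x‖ ∈ I} :=
    ContDiffOn.sum fun i _ => hcF i i
  have h1 := (ofRealCLM.hasDerivAt (x := r)).mul (hasDerivAt_sphInt hI hf hr hrI)
  convert! h1 using 1
  have hr0 : (r : ℂ) ≠ 0 := by exact_mod_cast hr.ne'
  simp only [ofRealCLM_apply, ofReal_one, one_mul]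
  rw [mul_inv_cancel_left₀ hr0, ← sphInt_const_mul,
    ← add_zero (sphInt r (fun x : E3 => ∑ i, (x i : ℂ) * F i x) + _),
    ← sphInt_angular_sum hI (G := fun j i x => (x j : ℂ) * F i x) (fun j i => hcF i j) hr hrI,
    ← sphInt_add hf.continuousOn _ hr.le hrI, ← sphInt_add _ _ hr.le hrI]
  · refine sphInt_congr hr.le fun x hx => ?_
    have hxI : ‖x‖ ∈ I := hx ▸ hrI
    have hd : ∀ i, DifferentiableAt ℝ (F i) x := fun i => differentiableAt_of_norm_mem hI (hF i) hxI
    have hd' : ∀ i j, DifferentiableAt ℝ (fun y : E3 => (y j : ℂ) * F i y) x :=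
      fun i j => differentiableAt_of_norm_mem hI (hcF i j) hxI
    simp only [pdC_sum _ (fun i => hd' i i), pdC_coord_mul (hd _)]
    rw [← hx, norm_sq_eq_sum_coord]
    simp [Fin.sum_univ_three]
    ring
  · exact hf.continuousOn.add (continuousOn_finsetSum _ fun j _ =>
      (continuous_coord j).continuousOn.mul (continuousOn_pdC hI hf j))
  · exact continuousOn_finsetSum _ fun i _ => continuousOn_finsetSum _ fun j _ =>
      ((continuous_coord i).continuousOn.mul (continuousOn_pdC hI (hcF j i) j)).sub
      ((continuous_coord j).continuousOn.mul (continuousOn_pdC hI (hcF j i) i))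
  · exact continuousOn_finsetSum _ fun j _ =>
      (continuous_coord j).continuousOn.mul (continuousOn_pdC hI hf j)

lemma pdC_translate (f : E3 → ℂ) (c : E3) (j : Fin 3) (x : E3) :
    pdC (fun y => f (c + y)) j x = pdC f j (c + x) := by
  rw [pdC, fderiv_comp_add_left]; rfl

lemma sphInt_zero (f : E3 → ℂ) :
    sphInt 0 f = ((volume : Measure E3).toSphere.real Set.univ : ℂ) * f 0 := by
  simp [sphInt]

lemma sphere_measure_pos : 0 < (volume : Measure E3).toSphere.real Set.univ := by
  rw [measureReal_def]
  refine ENNReal.toReal_pos ?_ (measure_ne_top _ _)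
  rw [Measure.measure_univ_ne_zero]
  exact Measure.toSphere_ne_zero _

/-- The divergence of a continuously differentiable curl vanishes. -/
lemma div_curl_eq_zero {a : ℝ} {H : E3 → Fin 3 → ℂ} {F : Fin 3 → E3 → ℂ}
    (hH : ∀ i, ContDiffOn ℝ 1 (fun x => H x i) {x | ‖x‖ ∈ Set.Ioi a})
    (hF : ∀ i, ContDiffOn ℝ 1 (F i) {x | ‖x‖ ∈ Set.Ioi a})
    (h : ∀ x, a < ‖x‖ → ∀ j, F j x = curlC H x j) {c : E3} (hc : a < ‖c‖) :
    ∑ i, pdC (F i) i c = 0 := by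
  set δ := ‖c‖ - a with hδdef
  have hδ : 0 < δ := sub_pos.2 hc
  have hmaps : Set.MapsTo (fun x : E3 => c + x) {x | ‖x‖ ∈ Set.Iio δ} {x | ‖x‖ ∈ Set.Ioi a} := by
    intro x hx
    have hx' : ‖x‖ < ‖c‖ - a := hx
    have := norm_sub_le (c + x) x
    rw [add_sub_cancel_right] at this
    change a < ‖c + x‖
    linarith
  have htr : ∀ f : E3 → ℂ, ContDiffOn ℝ 1 f {x | ‖x‖ ∈ Set.Ioi a} →
      ContDiffOn ℝ 1 (fun x => f (c + x)) {x | ‖x‖ ∈ Set.Iio δ} := fun f hf =>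
    hf.comp (contDiff_const.add contDiff_id).contDiffOn hmaps
  have hF' := fun i => htr (F i) (hF i)
  have hH' := fun i => htr _ (hH i)
  have hflux : ∀ s ∈ Set.Ioo 0 δ, sphInt s (fun x => ∑ i, (x i : ℂ) * F i (c + x)) = 0 := by
    intro s hs
    have hcong : sphInt s (fun x => ∑ i, (x i : ℂ) * F i (c + x))
        = sphInt s (fun x => ∑ i : Fin 3,
          ((x i : ℂ) * pdC (fun y => H (c + y) (i + 2)) (i + 1) x
            - (x (i + 1) : ℂ) * pdC (fun y => H (c + y) (i + 2)) i x)) := by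
      refine sphInt_congr hs.1.le fun x hx => ?_
      have hx' : a < ‖c + x‖ := hmaps (show ‖x‖ ∈ Set.Iio δ from hx ▸ hs.2)
      have hp : ∀ i j, pdC (fun y => H (c + y) i) j x = pdC (fun y => H y i) j (c + x) :=
        fun i j => pdC_translate (fun y => H y i) c j x
      simp only [hp, h _ hx', Fin.sum_univ_three, curlC]
      simp
      ring
    rw [hcong, sphInt_sum (J := Set.Iio δ) _ _ hs.1.le hs.2]
    · exact Finset.sum_eq_zero fun i _ => sphInt_angular isOpen_Iio (hH' _) hs.1 hs.2 _ _
    · intro i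
      exact ((continuous_coord _).continuousOn.mul (continuousOn_pdC isOpen_Iio (hH' _) _)).sub
        ((continuous_coord _).continuousOn.mul (continuousOn_pdC isOpen_Iio (hH' _) _))
  set D : E3 → ℂ := fun x => ∑ i, pdC (fun y => F i (c + y)) i x with hD
  have hzero : ∀ s ∈ Set.Ioo 0 δ, sphInt s D = 0 := by
    intro s hs
    have h1 := hasDerivAt_flux isOpen_Iio hF' hs.1 hs.2
    have h2 : HasDerivAt (fun s : ℝ => (s : ℂ) * sphInt s fun x => ∑ i, (x i : ℂ) * F i (c + x))
        0 s := by
      refine (hasDerivAt_const s (0 : ℂ)).congr_of_eventuallyEq ?_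
      filter_upwards [isOpen_Ioo.mem_nhds hs] with t ht
      rw [hflux t ht, mul_zero]
    have h3 := h1.unique h2
    have hs0 : (s : ℂ) ≠ 0 := by exact_mod_cast hs.1.ne'
    simpa [hs0] using h3
  have hDc : ContinuousOn D {x | ‖x‖ ∈ Set.Iio δ} :=
    continuousOn_finsetSum _ fun i _ => continuousOn_pdC isOpen_Iio (hF' i) i
  have hcont := continuousOn_sphInt (J := Set.Ico 0 δ) (fun r hr => hr.1)
    (hDc.mono fun x hx => (hx.2 : ‖x‖ < δ))
  have ht := (hcont 0 ⟨le_rfl, hδ⟩).mono (Set.Ioo_subset_Ico_self)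
  have ht0 : Filter.Tendsto (fun s => sphInt s D) (nhdsWithin 0 (Set.Ioo 0 δ)) (nhds 0) :=
    tendsto_const_nhds.congr' (by
      filter_upwards [self_mem_nhdsWithin] with s hs using (hzero s hs).symm)
  have : (nhdsWithin (0 : ℝ) (Set.Ioo 0 δ)).NeBot := left_nhdsWithin_Ioo_neBot hδ
  have hfin : sphInt 0 D = 0 := tendsto_nhds_unique ht ht0
  rw [sphInt_zero] at hfin
  have hpos : ((volume : Measure E3).toSphere.real Set.univ : ℂ) ≠ 0 := by
    exact_mod_cast sphere_measure_pos.ne'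
  have := (mul_eq_zero.1 hfin).resolve_left hpos
  simpa [hD, pdC_translate] using this

lemma sphInt_re {J : Set ℝ} {f : E3 → ℂ} (hf : ContinuousOn f {x | ‖x‖ ∈ J}) {r : ℝ}
    (hr : 0 ≤ r) (hrJ : r ∈ J) : (sphInt r f).re
      = ∫ θ : Metric.sphere (0 : E3) 1, (f (r • (θ : E3))).re ∂(volume : Measure E3).toSphere :=
  (integral_re (integrable_sphere (continuous_comp_smul_sphere hf hr hrJ))).symm

lemma sphInt_im {J : Set ℝ} {f : E3 → ℂ} (hf : ContinuousOn f {x | ‖x‖ ∈ J}) {r : ℝ}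
    (hr : 0 ≤ r) (hrJ : r ∈ J) : (sphInt r f).im
      = ∫ θ : Metric.sphere (0 : E3) 1, (f (r • (θ : E3))).im ∂(volume : Measure E3).toSphere :=
  (integral_im (integrable_sphere (continuous_comp_smul_sphere hf hr hrJ))).symm

lemma continuousOn_conj {s : Set E3} {f : E3 → ℂ} (hf : ContinuousOn f s) :
    ContinuousOn (fun x => (starRingEnd ℂ) (f x)) s :=
  continuous_conj.comp_continuousOn hf

lemma contDiffOn_conj {s : Set E3} {f : E3 → ℂ} (hf : ContDiffOn ℝ 1 f s) :
    ContDiffOn ℝ 1 (fun x => (starRingEnd ℂ) (f x)) s :=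
  (conjCLE : ℂ →L[ℝ] ℂ).contDiff.comp_contDiffOn hf

/-- For a divergence-free field, the radial derivative may be replaced by the curl in the flux. -/
lemma im_sphInt_conj_mul_radial {I : Set ℝ} (hI : IsOpen I) {E : E3 → Fin 3 → ℂ}
    (hE : ∀ i, ContDiffOn ℝ 1 (fun x => E x i) {x | ‖x‖ ∈ I})
    (hdiv : ∀ x, ‖x‖ ∈ I → ∑ i, pdC (fun y => E y i) i x = 0)
    {r : ℝ} (hr : 0 < r) (hrI : r ∈ I) :
    (sphInt r fun x => ∑ j, (starRingEnd ℂ) (E x j) *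
        ∑ i, (x i : ℂ) * pdC (fun y => E y j) i x).im
      = (sphInt r fun x => ∑ i, (x i : ℂ) *
          crossC (fun j => (starRingEnd ℂ) (E x j)) (curlC E x) i).im := by
  have hEc := fun i => (hE i).continuousOn
  have hpc := fun i j => continuousOn_pdC hI (hE i) j
  have hxc := fun i => (continuous_coord i).continuousOn (s := {x : E3 | ‖x‖ ∈ I})
  set w : E3 → ℂ := fun x => ∑ i, ∑ j,
    (x i : ℂ) * ((starRingEnd ℂ) (E x j) * pdC (fun y => E y i) j x) with hw
  have hwc : ContinuousOn w {x | ‖x‖ ∈ I} := continuousOn_finsetSum _ fun i _ =>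
    continuousOn_finsetSum _ fun j _ =>
      (hxc i).mul ((continuousOn_conj (hEc j)).mul (hpc i j))
  have hG : ∀ i j, ContDiffOn ℝ 1 (fun x => (starRingEnd ℂ) (E x j) * E x i) {x | ‖x‖ ∈ I} :=
    fun i j => (contDiffOn_conj (hE j)).mul (hE i)
  have hW : (sphInt r w).im = 0 := by
    rw [← conj_eq_iff_im, ← sphInt_conj, eq_comm,
      ← add_zero (sphInt r fun x => (starRingEnd ℂ) (w x)),
      ← sphInt_angular_sum hI hG hr hrI, ← sphInt_add (continuousOn_conj hwc) _ hr.le hrI]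
    · refine sphInt_congr hr.le fun x hx => ?_
      have hxI : ‖x‖ ∈ I := hx ▸ hrI
      have hd : ∀ i, DifferentiableAt ℝ (fun y => E y i) x :=
        fun i => differentiableAt_of_norm_mem hI (hE i) hxI
      have hd' : ∀ i, DifferentiableAt ℝ (fun y => (starRingEnd ℂ) (E y i)) x :=
        fun i => differentiableAt_of_norm_mem hI (contDiffOn_conj (hE i)) hxI
      have h0 := hdiv x hxI
      have h0' := congrArg (starRingEnd ℂ) h0
      simp only [hw, pdC_mul (hd' _) (hd _), pdC_conj (hd _), Fin.sum_univ_three, map_add, map_mul,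
        conj_conj, conj_ofReal, map_zero] at h0 h0' ⊢
      linear_combination ((x 0 : ℂ) * (starRingEnd ℂ) (E x 0) + (x 1 : ℂ) * (starRingEnd ℂ) (E x 1)
          + (x 2 : ℂ) * (starRingEnd ℂ) (E x 2)) * h0
        - ((x 0 : ℂ) * E x 0 + (x 1 : ℂ) * E x 1 + (x 2 : ℂ) * E x 2) * h0'
    · exact continuousOn_finsetSum _ fun i _ => continuousOn_finsetSum _ fun j _ =>
        ((hxc i).mul (continuousOn_pdC hI (hG i j) j)).sub
        ((hxc j).mul (continuousOn_pdC hI (hG i j) i))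
  have hcross : sphInt r (fun x => ∑ j, (starRingEnd ℂ) (E x j) *
        ∑ i, (x i : ℂ) * pdC (fun y => E y j) i x)
      = sphInt r (fun x => ∑ i, (x i : ℂ) *
          crossC (fun j => (starRingEnd ℂ) (E x j)) (curlC E x) i) + sphInt r w := by
    rw [← sphInt_add _ hwc hr.le hrI]
    · refine sphInt_congr hr.le fun x hx => ?_
      simp [hw, Fin.sum_univ_three, crossC, curlC]
      ring
    · refine continuousOn_finsetSum _ fun i _ => (hxc i).mul ?_
      have := fun i => continuousOn_conj (hEc i)
      fin_cases i <;> simp only [crossC, curlC] <;> simp <;>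
      exact ((this _).mul ((hpc _ _).sub (hpc _ _))).sub ((this _).mul ((hpc _ _).sub (hpc _ _)))
  rw [hcross, add_im, hW, add_zero]

/-- Four times the time-averaged Poynting vector. -/
def poynting (E H : E3 → Fin 3 → ℂ) (i : Fin 3) (x : E3) : ℂ :=
  crossC (E x) (fun j => (starRingEnd ℂ) (H x j)) i
    + crossC (fun j => (starRingEnd ℂ) (E x j)) (H x) i

lemma continuousOn_poynting {s : Set E3} {E H : E3 → Fin 3 → ℂ} (hE : ContinuousOn E s)
    (hH : ContinuousOn H s) (i : Fin 3) : ContinuousOn (poynting E H i) s := by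
  have h1 := fun j => (continuous_apply j).comp_continuousOn hE
  have h2 := fun j => (continuous_apply j).comp_continuousOn hH
  have h3 := fun j => continuousOn_conj (h1 j)
  have h4 := fun j => continuousOn_conj (h2 j)
  unfold poynting
  fin_cases i <;> simp only [crossC] <;> simp <;>
  exact (((h1 _).mul (h4 _)).sub ((h1 _).mul (h4 _))).add
    (((h3 _).mul (h2 _)).sub ((h3 _).mul (h2 _)))

lemma contDiffOn_poynting {s : Set E3} {E H : E3 → Fin 3 → ℂ}
    (h1 : ∀ i, ContDiffOn ℝ 1 (fun x => E x i) s) (h2 : ∀ i, ContDiffOn ℝ 1 (fun x => H x i) s)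
    (i : Fin 3) : ContDiffOn ℝ 1 (poynting E H i) s := by
  have h3 := fun j => contDiffOn_conj (h1 j)
  have h4 := fun j => contDiffOn_conj (h2 j)
  unfold poynting
  fin_cases i <;> simp only [crossC] <;> simp <;>
  exact (((h1 _).mul (h4 _)).sub ((h1 _).mul (h4 _))).add
    (((h3 _).mul (h2 _)).sub ((h3 _).mul (h2 _)))

lemma div_poynting {E H : E3 → Fin 3 → ℂ} {x : E3}
    (hE : ∀ i, DifferentiableAt ℝ (fun x => E x i) x)
    (hH : ∀ i, DifferentiableAt ℝ (fun x => H x i) x) {α β : ℝ}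
    (hME : curlC E x = fun j => I * (α : ℂ) * H x j)
    (hMH : curlC H x = fun j => -(I * (β : ℂ) * E x j)) :
    ∑ i, pdC (poynting E H i) i x = 0 := by
  have hE' : ∀ i, DifferentiableAt ℝ (fun x => (starRingEnd ℂ) (E x i)) x :=
    fun i => (conjCLE : ℂ →L[ℝ] ℂ).differentiableAt.comp x (hE i)
  have hH' : ∀ i, DifferentiableAt ℝ (fun x => (starRingEnd ℂ) (H x i)) x :=
    fun i => (conjCLE : ℂ →L[ℝ] ℂ).differentiableAt.comp x (hH i)
  have key : ∀ p q j : Fin 3, pdC (fun x =>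
      (E x p * (starRingEnd ℂ) (H x q) - E x q * (starRingEnd ℂ) (H x p))
      + ((starRingEnd ℂ) (E x p) * H x q - (starRingEnd ℂ) (E x q) * H x p)) j x =
      ((E x p * (starRingEnd ℂ) (pdC (fun x => H x q) j x)
        + (starRingEnd ℂ) (H x q) * pdC (fun x => E x p) j x)
      - (E x q * (starRingEnd ℂ) (pdC (fun x => H x p) j x)
        + (starRingEnd ℂ) (H x p) * pdC (fun x => E x q) j x))
      + (((starRingEnd ℂ) (E x p) * pdC (fun x => H x q) j x
        + H x q * (starRingEnd ℂ) (pdC (fun x => E x p) j x))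
      - ((starRingEnd ℂ) (E x q) * pdC (fun x => H x p) j x
        + H x p * (starRingEnd ℂ) (pdC (fun x => E x q) j x))) := by
    intro p q j
    rw [pdC_add (((hE p).fun_mul (hH' q)).fun_sub ((hE q).fun_mul (hH' p)))
        (((hE' p).fun_mul (hH q)).fun_sub ((hE' q).fun_mul (hH p))),
      pdC_sub ((hE p).fun_mul (hH' q)) ((hE q).fun_mul (hH' p)),
      pdC_sub ((hE' p).fun_mul (hH q)) ((hE' q).fun_mul (hH p)),
      pdC_mul (hE p) (hH' q), pdC_mul (hE q) (hH' p), pdC_mul (hE' p) (hH q),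
      pdC_mul (hE' q) (hH p), pdC_conj (hE p), pdC_conj (hE q), pdC_conj (hH p), pdC_conj (hH q)]
  have e0 := congrFun hME 0
  have e1 := congrFun hME 1
  have e2 := congrFun hME 2
  have f0 := congrFun hMH 0
  have f1 := congrFun hMH 1
  have f2 := congrFun hMH 2
  simp only [curlC, Matrix.cons_val_zero, Matrix.cons_val_one, Matrix.cons_val] at e0 e1 e2 f0 f1 f2
  have e0' := congrArg (starRingEnd ℂ) e0
  have e1' := congrArg (starRingEnd ℂ) e1
  have e2' := congrArg (starRingEnd ℂ) e2
  have f0' := congrArg (starRingEnd ℂ) f0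
  have f1' := congrArg (starRingEnd ℂ) f1
  have f2' := congrArg (starRingEnd ℂ) f2
  simp only [map_sub, map_mul, map_neg, conj_I, conj_ofReal] at e0' e1' e2' f0' f1' f2'
  rw [Fin.sum_univ_three]
  refine (congrArg₂ _ (congrArg₂ _ (key 1 2 0) (key 2 0 1)) (key 0 1 2)).trans ?_
  linear_combination (starRingEnd ℂ) (H x 0) * e0 + (starRingEnd ℂ) (H x 1) * e1
    + (starRingEnd ℂ) (H x 2) * e2 + H x 0 * e0' + H x 1 * e1' + H x 2 * e2'
    - E x 0 * f0' - E x 1 * f1' - E x 2 * f2'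
    - (starRingEnd ℂ) (E x 0) * f0 - (starRingEnd ℂ) (E x 1) * f1 - (starRingEnd ℂ) (E x 2) * f2

lemma sum_mul_poynting (E H : E3 → Fin 3 → ℂ) (x : E3) :
    ∑ i, (x i : ℂ) * poynting E H i x
      = (∑ i, (x i : ℂ) * crossC (E x) (fun j => (starRingEnd ℂ) (H x j)) i)
        + (starRingEnd ℂ) (∑ i, (x i : ℂ) * crossC (E x) (fun j => (starRingEnd ℂ) (H x j)) i) := by
  simp [Fin.sum_univ_three, poynting, crossC]
  ring

lemma normal_dot_cross_of_impedance {n : Fin 3 → ℝ} (hn : n 0 ^ 2 + n 1 ^ 2 + n 2 ^ 2 = 1)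
    {A B : Fin 3 → ℂ} {ζ : ℂ}
    (h : crossC (fun j => (n j : ℂ)) (crossC A (fun j => (n j : ℂ)))
      = fun j => ζ * crossC (fun j => (n j : ℂ)) B j) :
    ∑ i, (n i : ℂ) * crossC A (fun j => (starRingEnd ℂ) (B j)) i
      = -(ζ * ((∑ j, normSq (crossC (fun j => (n j : ℂ)) B j) : ℝ) : ℂ)) := by
  have hn' : (n 0 : ℂ) ^ 2 + (n 1 : ℂ) ^ 2 + (n 2 : ℂ) ^ 2 = 1 := by exact_mod_cast hn
  have h0 := congrFun h 0
  have h1 := congrFun h 1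
  have h2 := congrFun h 2
  simp only [crossC, Matrix.cons_val_zero, Matrix.cons_val_one, Matrix.cons_val] at h0 h1 h2
  push_cast [normSq_eq_conj_mul_self]
  simp only [Fin.sum_univ_three, crossC, Matrix.cons_val_zero, Matrix.cons_val_one,
    Matrix.cons_val, map_sub, map_mul, conj_ofReal]
  linear_combination
    -(((n 0 : ℂ) * (A 1 * (starRingEnd ℂ) (B 2) - A 2 * (starRingEnd ℂ) (B 1))
      + (n 1 : ℂ) * (A 2 * (starRingEnd ℂ) (B 0) - A 0 * (starRingEnd ℂ) (B 2))
      + (n 2 : ℂ) * (A 0 * (starRingEnd ℂ) (B 1) - A 1 * (starRingEnd ℂ) (B 0)))) * hn'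
    - ((n 1 : ℂ) * (starRingEnd ℂ) (B 2) - (n 2 : ℂ) * (starRingEnd ℂ) (B 1)) * h0
    - ((n 2 : ℂ) * (starRingEnd ℂ) (B 0) - (n 0 : ℂ) * (starRingEnd ℂ) (B 2)) * h1
    - ((n 0 : ℂ) * (starRingEnd ℂ) (B 1) - (n 1 : ℂ) * (starRingEnd ℂ) (B 0)) * h2

/-- No energy is radiated through any sphere when the boundary is absorbing. -/
lemma poynting_flux_re_nonpos {a α β : ℝ} (ha : 0 < a) {ζ : ℂ} (hζ : 0 ≤ ζ.re)
    {E H : E3 → Fin 3 → ℂ}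
    (hE : ContinuousOn E {x | ‖x‖ ∈ Set.Ici a}) (hH : ContinuousOn H {x | ‖x‖ ∈ Set.Ici a})
    (hE1 : ∀ i, ContDiffOn ℝ 1 (fun x => E x i) {x | ‖x‖ ∈ Set.Ioi a})
    (hH1 : ∀ i, ContDiffOn ℝ 1 (fun x => H x i) {x | ‖x‖ ∈ Set.Ioi a})
    (hME : ∀ x : E3, a < ‖x‖ → curlC E x = fun j => I * (α : ℂ) * H x j)
    (hMH : ∀ x : E3, a < ‖x‖ → curlC H x = fun j => -(I * (β : ℂ) * E x j))
    (hbc : ∀ x : E3, ‖x‖ = a →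
      crossC (fun j => ((a⁻¹ * x j : ℝ) : ℂ)) (crossC (E x) (fun j => ((a⁻¹ * x j : ℝ) : ℂ)))
        = fun j => ζ * crossC (fun j => ((a⁻¹ * x j : ℝ) : ℂ)) (H x) j) {r : ℝ} (hr : a ≤ r) :
    (sphInt r fun x => ∑ i, (x i : ℂ) * poynting E H i x).re ≤ 0 := by
  have hc : ContinuousOn (fun x : E3 => ∑ i, (x i : ℂ) * poynting E H i x)
      {x | ‖x‖ ∈ Set.Ici a} := continuousOn_finsetSum _ fun i _ =>
    (continuous_coord i).continuousOn.mul (continuousOn_poynting hE hH i)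
  set P : ℝ → ℂ := fun s => (s : ℂ) * sphInt s fun x => ∑ i, (x i : ℂ) * poynting E H i x with hP
  have hPc : ContinuousOn P (Set.Ici a) := continuous_ofReal.continuousOn.mul
    (continuousOn_sphInt (fun s hs => ha.le.trans hs) hc)
  have hPd : ∀ s ∈ Set.Ioi a, HasDerivAt P 0 s := by
    intro s hs
    have h := hasDerivAt_flux isOpen_Ioi (fun i => contDiffOn_poynting hE1 hH1 i) (ha.trans hs) hs
    rw [sphInt_congr (g := fun _ => (0 : ℂ)) (ha.trans hs).le] at h
    · rw [show sphInt s (fun _ => (0 : ℂ)) = 0 by simp [sphInt], mul_zero] at h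
      exact h
    · intro x hx
      have hx' : ‖x‖ ∈ Set.Ioi a := hx ▸ hs
      exact div_poynting (fun i => differentiableAt_of_norm_mem isOpen_Ioi (hE1 i) hx')
        (fun i => differentiableAt_of_norm_mem isOpen_Ioi (hH1 i) hx') (hME x hx') (hMH x hx')
  have hanti : AntitoneOn (fun s => (P s).re) (Set.Ici a) := by
    have hd : ∀ s ∈ Set.Ioi a, HasDerivAt (fun s => (P s).re) 0 s := fun s hs =>
      reCLM.hasFDerivAt.comp_hasDerivAt s (hPd s hs)
    refine antitoneOn_of_deriv_nonpos (convex_Ici a) (continuous_re.comp_continuousOn hPc) ?_ ?_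
    all_goals rw [interior_Ici]
    · exact fun s hs => (hd s hs).differentiableAt.differentiableWithinAt
    · exact fun s hs => (hd s hs).deriv.le
  have hPa : (P a).re ≤ 0 := by
    rw [hP, re_ofReal_mul, sphInt_re hc ha.le Set.self_mem_Ici]
    refine mul_nonpos_of_nonneg_of_nonpos ha.le (integral_nonpos fun θ => ?_)
    set x := a • (θ : E3) with hx
    have hxa : ‖x‖ = a := norm_smul_sphere ha.le θ
    have hn : (a⁻¹ * x 0) ^ 2 + (a⁻¹ * x 1) ^ 2 + (a⁻¹ * x 2) ^ 2 = 1 := by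
      have : ‖x‖ ^ 2 = x 0 ^ 2 + x 1 ^ 2 + x 2 ^ 2 := by
        rw [EuclideanSpace.real_norm_sq_eq, Fin.sum_univ_three]
      rw [hxa] at this
      field_simp
      linarith
    have h := normal_dot_cross_of_impedance (n := fun j => a⁻¹ * x j) hn (hbc x hxa)
    have h' : ∑ i, (x i : ℂ) * crossC (E x) (fun j => (starRingEnd ℂ) (H x j)) i = (a : ℂ) *
        ∑ i, ((a⁻¹ * x i : ℝ) : ℂ) * crossC (E x) (fun j => (starRingEnd ℂ) (H x j)) i := by
      rw [Finset.mul_sum]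
      refine Finset.sum_congr rfl fun i _ => ?_
      have : (a : ℂ) ≠ 0 := by exact_mod_cast ha.ne'
      push_cast
      field_simp
    simp only [Pi.zero_apply]
    rw [sum_mul_poynting, h', h, add_re, conj_re, re_ofReal_mul, neg_re, re_mul_ofReal]
    have : 0 ≤ ∑ j, normSq (crossC (fun j => ((a⁻¹ * x j : ℝ) : ℂ)) (H x) j) :=
      Finset.sum_nonneg fun _ _ => normSq_nonneg _
    nlinarith [mul_nonneg ha.le (mul_nonneg hζ this)]
  have hPr := (hanti Set.self_mem_Ici hr hr).trans hPa
  simp only [hP, re_ofReal_mul] at hPr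
  exact nonpos_of_mul_nonpos_right hPr (ha.trans_le hr)

lemma im_sphInt_conj_mul_radial_nonpos {a α β : ℝ} (ha : 0 < a) (hα : 0 < α) {ζ : ℂ}
    (hζ : 0 ≤ ζ.re) {E H : E3 → Fin 3 → ℂ}
    (hE : ContinuousOn E {x | ‖x‖ ∈ Set.Ici a}) (hH : ContinuousOn H {x | ‖x‖ ∈ Set.Ici a})
    (hE1 : ∀ i, ContDiffOn ℝ 1 (fun x => E x i) {x | ‖x‖ ∈ Set.Ioi a})
    (hH1 : ∀ i, ContDiffOn ℝ 1 (fun x => H x i) {x | ‖x‖ ∈ Set.Ioi a})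
    (hdiv : ∀ x, ‖x‖ ∈ Set.Ioi a → ∑ i, pdC (fun y => E y i) i x = 0)
    (hME : ∀ x : E3, a < ‖x‖ → curlC E x = fun j => I * (α : ℂ) * H x j)
    (hMH : ∀ x : E3, a < ‖x‖ → curlC H x = fun j => -(I * (β : ℂ) * E x j))
    (hbc : ∀ x : E3, ‖x‖ = a →
      crossC (fun j => ((a⁻¹ * x j : ℝ) : ℂ)) (crossC (E x) (fun j => ((a⁻¹ * x j : ℝ) : ℂ)))
        = fun j => ζ * crossC (fun j => ((a⁻¹ * x j : ℝ) : ℂ)) (H x) j) {r : ℝ} (hr : a < r) :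
    (sphInt r fun x => ∑ j, (starRingEnd ℂ) (E x j) *
        ∑ i, (x i : ℂ) * pdC (fun y => E y j) i x).im ≤ 0 := by
  have hr0 := ha.trans hr
  have hP := poynting_flux_re_nonpos ha hζ hE hH hE1 hH1 hME hMH hbc hr.le
  rw [im_sphInt_conj_mul_radial isOpen_Ioi hE1 hdiv hr0 hr]
  set t : E3 → ℂ := fun x =>
    ∑ i, (x i : ℂ) * crossC (fun j => (starRingEnd ℂ) (E x j)) (H x) i with ht
  have htc : ContinuousOn t {x | ‖x‖ ∈ Set.Ici a} := by
    have h1 := fun j => continuousOn_conj ((continuous_apply j).comp_continuousOn hE)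
    have h2 := fun j => (continuous_apply j).comp_continuousOn hH
    refine continuousOn_finsetSum _ fun i _ => (continuous_coord i).continuousOn.mul ?_
    fin_cases i <;> simp only [crossC] <;> simp <;>
    exact ((h1 _).mul (h2 _)).sub ((h1 _).mul (h2 _))
  have h1 : (sphInt r fun x => ∑ i, (x i : ℂ) *
      crossC (fun j => (starRingEnd ℂ) (E x j)) (curlC E x) i) = I * (α : ℂ) * sphInt r t := by
    rw [← sphInt_const_mul]
    refine sphInt_congr hr0.le fun x hx => ?_
    rw [hME x (hx ▸ hr)]
    simp [ht, Fin.sum_univ_three, crossC]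
    ring
  have h2 : (sphInt r fun x => ∑ i, (x i : ℂ) * poynting E H i x)
      = sphInt r t + (starRingEnd ℂ) (sphInt r t) := by
    rw [← sphInt_conj, ← sphInt_add htc (continuousOn_conj htc) hr0.le hr.le]
    refine sphInt_congr hr0.le fun x hx => ?_
    simp [ht, Fin.sum_univ_three, poynting, crossC]
    ring
  rw [h2, add_re, conj_re] at hP
  rw [h1, show I * (α : ℂ) * sphInt r t = (α : ℂ) * (I * sphInt r t) by ring, im_ofReal_mul,
    I_mul_im]
  exact mul_nonpos_of_nonneg_of_nonpos hα.le (by linarith)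

/-- The radial derivative of a scalar field, in terms of partial derivatives. -/
def radC (f : E3 → ℂ) (x : E3) : ℂ := (‖x‖ : ℂ)⁻¹ * ∑ i, (x i : ℂ) * pdC f i x

lemma continuousOn_radC {I : Set ℝ} (hI : IsOpen I) (h0 : ∀ r ∈ I, 0 < r) {f : E3 → ℂ}
    (hf : ContDiffOn ℝ 1 f {x | ‖x‖ ∈ I}) : ContinuousOn (radC f) {x | ‖x‖ ∈ I} := by
  refine ContinuousOn.mul (ContinuousOn.inv₀ (by fun_prop) fun x hx => ?_)
    (continuousOn_finsetSum _ fun i _ =>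
      (continuous_coord i).continuousOn.mul (continuousOn_pdC hI hf i))
  exact_mod_cast (h0 _ hx).ne'

/-- Pointwise consequence of the radiation condition. -/
lemma mul_norm_le_of_radiation {R ε k : ℝ} (hR : 0 ≤ R) (hε : 0 < ε)
    {A B : Fin 3 → ℂ} (h : ∀ j, R * ‖B j - I * (k : ℂ) * A j‖ ≤ ε) (j : Fin 3) :
    R * (k * ‖A j‖) ≤ 4 * ε + 2 * k * R ^ 2 / ε * (∑ j, (starRingEnd ℂ) (A j) * B j).im ∧
    R * ‖B j‖ ≤ 4 * ε + 2 * k * R ^ 2 / ε * (∑ j, (starRingEnd ℂ) (A j) * B j).im := by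
  have hid : ∀ j, ‖B j‖ ^ 2 + (k * ‖A j‖) ^ 2
      = ‖B j - I * (k : ℂ) * A j‖ ^ 2 + 2 * k * ((starRingEnd ℂ) (A j) * B j).im := by
    intro j
    rw [mul_pow]
    simp only [← normSq_eq_norm_sq, normSq_apply, mul_im, mul_re, sub_re, sub_im, I_re, I_im,
      ofReal_re, ofReal_im, conj_re, conj_im]
    ring
  have hsq : ∀ j, R ^ 2 * ‖B j - I * (k : ℂ) * A j‖ ^ 2 ≤ ε ^ 2 := fun j => by
    rw [← mul_pow]
    exact pow_le_pow_left₀ (by positivity) (h j) 2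
  have htot : ∑ j, R ^ 2 * (‖B j‖ ^ 2 + (k * ‖A j‖) ^ 2)
      ≤ 3 * ε ^ 2 + 2 * k * R ^ 2 * (∑ j, (starRingEnd ℂ) (A j) * B j).im := by
    simp only [hid, Fin.sum_univ_three, add_im]
    nlinarith [hsq 0, hsq 1, hsq 2]
  have hle : R ^ 2 * (‖B j‖ ^ 2 + (k * ‖A j‖) ^ 2)
      ≤ 3 * ε ^ 2 + 2 * k * R ^ 2 * (∑ j, (starRingEnd ℂ) (A j) * B j).im :=
    (Finset.single_le_sum (f := fun j => R ^ 2 * (‖B j‖ ^ 2 + (k * ‖A j‖) ^ 2))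
      (fun _ _ => by positivity) (Finset.mem_univ j)).trans htot
  set M := (∑ j, (starRingEnd ℂ) (A j) * B j).im
  have aux : ∀ u : ℝ, u ^ 2 ≤ 3 * ε ^ 2 + 2 * k * R ^ 2 * M →
      u ≤ 4 * ε + 2 * k * R ^ 2 / ε * M := by
    intro u hu
    rw [div_mul_eq_mul_div, ← sub_le_iff_le_add', le_div_iff₀ hε]
    nlinarith [sq_nonneg (u - ε)]
  constructor <;> apply aux <;> nlinarith [sq_nonneg (R * ‖B j‖), sq_nonneg (R * (k * ‖A j‖))]

/-- The mean modulus of a radiating field with no outgoing energy is `o(1 / r)`. -/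
lemma tendsto_mul_integral_norm {a k : ℝ} (ha : 0 < a) (hk : 0 < k) {E : Fin 3 → E3 → ℂ}
    (hE : ∀ i, ContDiffOn ℝ 1 (E i) {x | ‖x‖ ∈ Set.Ioi a})
    (him : ∀ r, a < r → (sphInt r fun x => ∑ j, (starRingEnd ℂ) (E j x) *
        ∑ i, (x i : ℂ) * pdC (E j) i x).im ≤ 0)
    (hrad : ∀ ε : ℝ, 0 < ε → ∃ R₀ : ℝ, ∀ R : ℝ, R₀ ≤ R → ∀ x : E3, ‖x‖ = R → ∀ j,
      R * ‖radC (E j) x - I * (k : ℂ) * E j x‖ ≤ ε) {ε : ℝ} (hε : 0 < ε) :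
    ∃ R₀ : ℝ, ∀ r : ℝ, R₀ ≤ r → ∀ j,
      r * ∫ θ : Metric.sphere (0 : E3) 1, ‖E j (r • (θ : E3))‖ ∂(volume : Measure E3).toSphere ≤ ε ∧
      r * ∫ θ : Metric.sphere (0 : E3) 1, ‖radC (E j) (r • (θ : E3))‖
        ∂(volume : Measure E3).toSphere ≤ ε := by
  set σ := (volume : Measure E3).toSphere.real Set.univ with hσ
  have hσ0 : 0 < σ := sphere_measure_pos
  have hm : 0 < min 1 k := lt_min one_pos hk
  set δ := min 1 k * ε / (4 * σ) with hδ
  have hδ0 : 0 < δ := by positivity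
  obtain ⟨R₀, hR₀⟩ := hrad δ hδ0
  refine ⟨max R₀ (a + 1), fun r hr j => ?_⟩
  have hra : a < r := by linarith [(le_max_right _ _).trans hr]
  have hr0 := ha.trans hra
  have hcE := fun j => continuous_comp_smul_sphere (hE j).continuousOn hr0.le hra
  have hcR := fun j => continuous_comp_smul_sphere
    (continuousOn_radC isOpen_Ioi (fun s hs => ha.trans hs) (hE j)) hr0.le hra
  have hM : Continuous fun θ : Metric.sphere (0 : E3) 1 => (∑ j, (starRingEnd ℂ)
      (E j (r • (θ : E3))) * radC (E j) (r • (θ : E3))).im :=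
    continuous_im.comp (continuous_finsetSum _ fun j _ =>
      (continuous_conj.comp (hcE j)).mul (hcR j))
  have hMle : ∫ θ : Metric.sphere (0 : E3) 1, (∑ j, (starRingEnd ℂ)
      (E j (r • (θ : E3))) * radC (E j) (r • (θ : E3))).im ∂(volume : Measure E3).toSphere ≤ 0 := by
    have h1 := sphInt_im (f := fun x => ∑ j, (starRingEnd ℂ) (E j x) * radC (E j) x)
      (J := Set.Ioi a) (continuousOn_finsetSum _ fun j _ =>
        (continuousOn_conj (hE j).continuousOn).mul
        (continuousOn_radC isOpen_Ioi (fun s hs => ha.trans hs) (hE j))) hr0.le hra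
    rw [← h1, sphInt_congr (g := fun x => ((r⁻¹ : ℝ) : ℂ) * ∑ j, (starRingEnd ℂ) (E j x) *
        ∑ i, (x i : ℂ) * pdC (E j) i x) hr0.le, sphInt_const_mul, im_ofReal_mul]
    · exact mul_nonpos_of_nonneg_of_nonpos (by positivity) (him r hra)
    · intro x hx
      rw [Finset.mul_sum]
      refine Finset.sum_congr rfl fun j _ => ?_
      rw [radC, hx]
      push_cast
      ring
  have hbd : ∀ u : Metric.sphere (0 : E3) 1 → ℝ, Continuous u → (∀ θ, u θ ≤ 4 * δ +
      2 * k * r ^ 2 / δ * (∑ j, (starRingEnd ℂ)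
        (E j (r • (θ : E3))) * radC (E j) (r • (θ : E3))).im) →
      ∫ θ, u θ ∂(volume : Measure E3).toSphere ≤ min 1 k * ε := by
    intro u hu hle
    have h := integral_mono (μ := (volume : Measure E3).toSphere) (integrable_sphere hu)
      (integrable_sphere (f := fun θ : Metric.sphere (0 : E3) 1 => 4 * δ + 2 * k * r ^ 2 / δ *
        (∑ j, (starRingEnd ℂ) (E j (r • (θ : E3))) * radC (E j) (r • (θ : E3))).im)
        (by fun_prop)) hle
    rw [integral_add (integrable_sphere (by fun_prop)) (integrable_sphere (by fun_prop)),
      integral_const_mul (2 * k * r ^ 2 / δ), integral_const, smul_eq_mul, ← hσ] at h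
    have h2 := mul_nonpos_of_nonneg_of_nonpos (a := 2 * k * r ^ 2 / δ) (by positivity) hMle
    have h3 : σ * (4 * δ) = min 1 k * ε := by rw [hδ]; field_simp
    linarith
  have hpt := fun θ : Metric.sphere (0 : E3) 1 => mul_norm_le_of_radiation hr0.le hδ0
    (A := fun j => E j (r • (θ : E3))) (B := fun j => radC (E j) (r • (θ : E3)))
    (hR₀ r ((le_max_left _ _).trans hr) _ (norm_smul_sphere hr0.le θ)) j
  have hA := hbd (fun θ => r * (k * ‖E j (r • (θ : E3))‖))
    (continuous_const.mul (continuous_const.mul (hcE j).norm))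
    fun θ => (hpt θ).1
  have hB := hbd (fun θ => r * ‖radC (E j) (r • (θ : E3))‖) (continuous_const.mul (hcR j).norm)
    fun θ => (hpt θ).2
  rw [integral_const_mul, integral_const_mul] at hA
  rw [integral_const_mul] at hB
  constructor
  · have := mul_le_mul_of_nonneg_right (min_le_right 1 k) hε.le
    refine le_of_mul_le_mul_left ?_ hk
    linarith
  · have := mul_le_mul_of_nonneg_right (min_le_left 1 k) hε.le
    linarith

/-- A decaying solution of the spherical Bessel equation in Liouville normal form vanishes. -/
lemma eq_zero_of_ode_of_tendsto_zero {a k N : ℝ} (ha : 0 < a) (hk : 0 < k) (hN : 0 ≤ N)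
    {g q : ℝ → ℂ} (hg : ∀ r, a < r → HasDerivAt g (q r) r)
    (hq : ∀ r, a < r → HasDerivAt q (((N / r ^ 2 - k ^ 2 : ℝ) : ℂ) * g r) r)
    (hlim : ∀ ε : ℝ, 0 < ε → ∃ R₀ : ℝ, ∀ r, R₀ ≤ r → ‖g r‖ ≤ ε ∧ ‖q r‖ ≤ ε)
    {r : ℝ} (hr : a < r) : g r = 0 := by
  set Φ : ℝ → ℝ := fun r => ‖q r‖ ^ 2 + k ^ 2 * ‖g r‖ ^ 2 with hΦ
  have hΦ0 : ∀ r, 0 ≤ Φ r := fun r => by positivity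
  have hmono : MonotoneOn (fun r => Φ r * Real.exp (-(N / k) * r⁻¹)) (Set.Ioi a) := by
    have hd : ∀ s ∈ Set.Ioi a, HasDerivAt (fun r => Φ r * Real.exp (-(N / k) * r⁻¹))
        ((2 * inner ℝ (q s) (((N / s ^ 2 - k ^ 2 : ℝ) : ℂ) * g s)
          + k ^ 2 * (2 * inner ℝ (g s) (q s))) * Real.exp (-(N / k) * s⁻¹)
          + Φ s * (Real.exp (-(N / k) * s⁻¹) * (-(N / k) * -(s ^ 2)⁻¹))) s := fun s hs =>
      (((hq s hs).norm_sq).add (((hg s hs).norm_sq).const_mul (k ^ 2))).mul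
        (((hasDerivAt_inv (ha.trans hs).ne').const_mul _).exp)
    refine monotoneOn_of_deriv_nonneg (convex_Ioi a)
      (fun s hs => (hd s hs).continuousAt.continuousWithinAt) ?_ ?_
    all_goals rw [interior_Ioi]
    · exact fun s hs => (hd s hs).differentiableAt.differentiableWithinAt
    · intro s hs
      rw [(hd s hs).deriv]
      have hs0 : 0 < s := ha.trans hs
      have hin : 2 * inner ℝ (q s) (((N / s ^ 2 - k ^ 2 : ℝ) : ℂ) * g s)
          + k ^ 2 * (2 * inner ℝ (g s) (q s)) = 2 * (N / s ^ 2) * inner ℝ (g s) (q s) := by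
        rw [← real_smul, inner_smul_right, real_inner_comm]
        ring
      rw [hin]
      have hcs := neg_le_of_abs_le (abs_real_inner_le_norm (g s) (q s))
      have h1 : 2 * k * (‖g s‖ * ‖q s‖) ≤ Φ s := by
        simp only [hΦ]
        nlinarith [sq_nonneg (‖q s‖ - k * ‖g s‖)]
      have h2 : 0 ≤ 2 * k * inner ℝ (g s) (q s) + Φ s := by nlinarith
      have h3 : 0 ≤ N / (k * s ^ 2) * Real.exp (-(N / k) * s⁻¹) := by positivity
      refine (mul_nonneg h3 h2).trans_eq ?_
      field_simp
  have hle : Φ r * Real.exp (-(N / k) * r⁻¹) ≤ 0 := by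
    refine le_of_forall_pos_le_add fun ε hε => ?_
    have hk1 : 0 < 1 + k ^ 2 := by positivity
    obtain ⟨R₀, hR⟩ := hlim (min 1 (ε / (1 + k ^ 2))) (lt_min one_pos (by positivity))
    set R := max R₀ r
    obtain ⟨h1, h2⟩ := hR R (le_max_left _ _)
    have hrR : r ≤ R := le_max_right _ _
    have hR0 : 0 < R := ha.trans (hr.trans_le hrR)
    refine (hmono hr (hr.trans_le hrR) hrR).trans ?_
    have hexp : Real.exp (-(N / k) * R⁻¹) ≤ 1 := by
      rw [Real.exp_le_one_iff]
      have : 0 ≤ N / k * R⁻¹ := by positivity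
      linarith
    refine (mul_le_of_le_one_right (hΦ0 R) hexp).trans ?_
    have hsq : ∀ z : ℂ, ‖z‖ ≤ min 1 (ε / (1 + k ^ 2)) → ‖z‖ ^ 2 ≤ ε / (1 + k ^ 2) := by
      intro z hz
      have h1 := hz.trans (min_le_left _ _)
      have h2 := hz.trans (min_le_right _ _)
      nlinarith [norm_nonneg z]
    have h3 := hsq _ h1
    have h4 := mul_le_mul_of_nonneg_left (hsq _ h1) (sq_nonneg k)
    have h5 := hsq _ h2
    have h6 : ε / (1 + k ^ 2) + k ^ 2 * (ε / (1 + k ^ 2)) = ε := by field_simp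
    simp only [hΦ]
    linarith
  have hz : Φ r ≤ 0 := nonpos_of_mul_nonpos_left hle (Real.exp_pos _)
  have : ‖g r‖ ^ 2 = 0 := by
    have : k ^ 2 * ‖g r‖ ^ 2 ≤ 0 := by
      simp only [hΦ] at hz
      nlinarith [sq_nonneg ‖q r‖]
    exact le_antisymm (nonpos_of_mul_nonpos_right this (by positivity)) (sq_nonneg _)
  simpa using this

/-- A real polynomial in the coordinates, as a complex-valued function. -/
def polyC (P : MvPolynomial (Fin 3) ℝ) (x : E3) : ℂ :=
  ((MvPolynomial.eval (fun i => x i) P : ℝ) : ℂ)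

lemma polyC_add (P Q : MvPolynomial (Fin 3) ℝ) (x : E3) :
    polyC (P + Q) x = polyC P x + polyC Q x := by simp [polyC]

lemma polyC_mul (P Q : MvPolynomial (Fin 3) ℝ) (x : E3) :
    polyC (P * Q) x = polyC P x * polyC Q x := by simp [polyC]

lemma polyC_sum {ι : Type*} (s : Finset ι) (P : ι → MvPolynomial (Fin 3) ℝ) (x : E3) :
    polyC (∑ i ∈ s, P i) x = ∑ i ∈ s, polyC (P i) x := by simp [polyC]

lemma polyC_X (i : Fin 3) (x : E3) : polyC (MvPolynomial.X i) x = (x i : ℂ) := by simp [polyC]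

lemma contDiff_polyC (P : MvPolynomial (Fin 3) ℝ) {n : WithTop ℕ∞} : ContDiff ℝ n (polyC P) := by
  induction P using MvPolynomial.induction_on with
  | C c =>
    have : polyC (MvPolynomial.C c) = fun _ => (c : ℂ) := by ext; simp [polyC]
    exact this ▸ contDiff_const
  | add P Q hP hQ => simpa only [funext (polyC_add P Q)] using hP.add hQ
  | mul_X P i hP =>
    simpa only [funext (polyC_mul P _), polyC_X] using hP.mul (contDiff_coord i)

lemma pdC_polyC (P : MvPolynomial (Fin 3) ℝ) (j : Fin 3) (x : E3) :
    pdC (polyC P) j x = polyC (MvPolynomial.pderiv j P) x := by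
  have hd : ∀ Q, DifferentiableAt ℝ (polyC Q) x := fun Q =>
    (contDiff_polyC Q (n := 1)).differentiable one_ne_zero x
  induction P using MvPolynomial.induction_on with
  | C c =>
    have : polyC (MvPolynomial.C c) = fun _ => (c : ℂ) := by ext; simp [polyC]
    rw [this]
    simp [pdC, polyC]
  | add P Q hP hQ =>
    rw [funext (polyC_add P Q), pdC_add (hd P) (hd Q), hP, hQ, map_add, polyC_add]
  | mul_X P i hP =>
    rw [funext (polyC_mul P _), pdC_mul (hd P) (hd _), hP, funext (polyC_X i), pdC_coord,
      MvPolynomial.pderiv_mul, polyC_add, polyC_mul, polyC_mul, polyC_X, MvPolynomial.pderiv_X]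
    rcases eq_or_ne i j with rfl | h
    · simp [polyC]
      ring
    · simp [polyC, h]
      ring

lemma polyC_smul {P : MvPolynomial (Fin 3) ℝ} {n : ℕ} (hP : P.IsHomogeneous n) (r : ℝ) (x : E3) :
    polyC P (r • x) = (r : ℂ) ^ n * polyC P x := by
  unfold polyC
  rw [← ofReal_pow, ← ofReal_mul, MvPolynomial.eval_eq', MvPolynomial.eval_eq', Finset.mul_sum]
  congr 1
  refine Finset.sum_congr rfl fun d hd => ?_
  have h := hP (MvPolynomial.mem_support_iff.1 hd)
  have h' : ∑ i, d i = n := by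
    rw [← h, Finsupp.weight_apply, Finsupp.sum_fintype] <;> simp
  simp only [PiLp.smul_apply, smul_eq_mul, mul_pow, Finset.prod_mul_distrib,
    Finset.prod_pow_eq_pow_sum, h']
  ring

lemma sum_coord_mul_polyC_pderiv {P : MvPolynomial (Fin 3) ℝ} {n : ℕ} (hP : P.IsHomogeneous n)
    (x : E3) : ∑ i, (x i : ℂ) * polyC (MvPolynomial.pderiv i P) x = n * polyC P x := by
  have h := congrArg (fun Q => polyC Q x) hP.sum_X_mul_pderiv
  simp only [polyC_sum, polyC_mul, polyC_X] at h
  rw [h]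
  simp [polyC]

lemma exists_norm_polyC_le {P : MvPolynomial (Fin 3) ℝ} {n : ℕ} (hP : P.IsHomogeneous n) :
    ∃ C : ℝ, 0 ≤ C ∧ ∀ r : ℝ, 0 ≤ r → ∀ θ : Metric.sphere (0 : E3) 1,
      ‖polyC P (r • (θ : E3))‖ ≤ C * r ^ n := by
  obtain ⟨C, hC⟩ := (isCompact_sphere (0 : E3) 1).exists_bound_of_continuousOn
    (contDiff_polyC P (n := 1)).continuous.continuousOn
  refine ⟨max C 0, le_max_right _ _, fun r hr θ => ?_⟩
  rw [polyC_smul hP, norm_mul, norm_pow, norm_real, Real.norm_of_nonneg hr, mul_comm]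
  gcongr
  exact (hC θ θ.2).trans (le_max_left _ _)

/-- The antisymmetrized gradient of a field with curl `h`. -/
def skewOfCurl (h : E3 → Fin 3 → ℂ) (i j : Fin 3) (x : E3) : ℂ :=
  ![![0, h x 2, -h x 1], ![-h x 2, 0, h x 0], ![h x 1, -h x 0, 0]] i j

lemma contDiffOn_skewOfCurl {s : Set E3} {h : E3 → Fin 3 → ℂ}
    (hh : ∀ i, ContDiffOn ℝ 1 (fun x => h x i) s) (i j : Fin 3) :
    ContDiffOn ℝ 1 (skewOfCurl h i j) s := by
  unfold skewOfCurl
  fin_cases i <;> fin_cases j <;> simp <;>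
  first | exact contDiffOn_const | exact hh _ | exact (hh _).neg

lemma pdC_skewOfCurl (h : E3 → Fin 3 → ℂ) (i j l : Fin 3) (x : E3) :
    pdC (skewOfCurl h i j) l x
      = ![![0, pdC (fun y => h y 2) l x, -pdC (fun y => h y 1) l x],
        ![-pdC (fun y => h y 2) l x, 0, pdC (fun y => h y 0) l x],
        ![pdC (fun y => h y 1) l x, -pdC (fun y => h y 0) l x, 0]] i j := by
  have h0 : pdC (fun _ => (0 : ℂ)) l x = 0 := by simp [pdC]
  fin_cases i <;> fin_cases j <;> first | exact h0 | exact pdC_neg l | rfl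

/-- A flux field whose divergence produces the moments of a component of `E`. -/
def momentField (E h : E3 → Fin 3 → ℂ) (P : MvPolynomial (Fin 3) ℝ) (j i : Fin 3) (x : E3) : ℂ :=
  polyC P x * skewOfCurl h i j x - E x i * polyC (MvPolynomial.pderiv j P) x
    + (if i = j then 1 else 0) * ∑ l, E x l * polyC (MvPolynomial.pderiv l P) x
    - E x j * polyC (MvPolynomial.pderiv i P) x

lemma contDiffOn_momentField {s : Set E3} {E h : E3 → Fin 3 → ℂ}
    (hE : ∀ i, ContDiffOn ℝ 1 (fun x => E x i) s) (hh : ∀ i, ContDiffOn ℝ 1 (fun x => h x i) s)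
    (P : MvPolynomial (Fin 3) ℝ) (j i : Fin 3) : ContDiffOn ℝ 1 (momentField E h P j i) s :=
  have hp := fun Q => (contDiff_polyC Q (n := 1)).contDiffOn (s := s)
  ((((hp P).mul (contDiffOn_skewOfCurl hh i j)).sub ((hE i).mul (hp _))).add
    (contDiffOn_const.mul (ContDiffOn.sum fun l _ => (hE l).mul (hp _)))).sub ((hE j).mul (hp _))

lemma pderiv_pderiv_comm (P : MvPolynomial (Fin 3) ℝ) (i j : Fin 3) :
    MvPolynomial.pderiv i (MvPolynomial.pderiv j P)
      = MvPolynomial.pderiv j (MvPolynomial.pderiv i P) := by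
  have : ⁅MvPolynomial.pderiv (R := ℝ) (σ := Fin 3) i,
      MvPolynomial.pderiv (R := ℝ) (σ := Fin 3) j⁆ = 0 := by
    refine MvPolynomial.derivation_ext fun l => ?_
    rw [Derivation.commutator_apply, MvPolynomial.pderiv_X, MvPolynomial.pderiv_X,
      Pi.single_apply, Pi.single_apply]
    split_ifs <;> simp
  have h := congrArg (fun D => D P) this
  simpa [Derivation.commutator_apply, sub_eq_zero] using h

lemma sum_pdC_momentField {E h : E3 → Fin 3 → ℂ} {x : E3} {κ : ℂ}
    (hE : ∀ i, DifferentiableAt ℝ (fun x => E x i) x)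
    (hh : ∀ i j, DifferentiableAt ℝ (skewOfCurl h i j) x)
    (hcE : curlC E x = h x) (hch : curlC h x = fun j => κ * E x j)
    (hdiv : ∑ i, pdC (fun y => E y i) i x = 0) (P : MvPolynomial (Fin 3) ℝ) (j : Fin 3) :
    ∑ i, pdC (momentField E h P j i) i x = -(κ * (polyC P x * E x j))
      - polyC (∑ i, MvPolynomial.pderiv i (MvPolynomial.pderiv i P)) x * E x j := by
  have hd : ∀ Q, DifferentiableAt ℝ (polyC Q) x := fun Q =>
    (contDiff_polyC Q (n := 1)).differentiable one_ne_zero x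
  have key : ∀ i, pdC (momentField E h P j i) i x
      = (polyC P x * pdC (skewOfCurl h i j) i x
          + skewOfCurl h i j x * polyC (MvPolynomial.pderiv i P) x)
        - (E x i * polyC (MvPolynomial.pderiv i (MvPolynomial.pderiv j P)) x
          + polyC (MvPolynomial.pderiv j P) x * pdC (fun y => E y i) i x)
        + (if i = j then 1 else 0) * ∑ l,
          (E x l * polyC (MvPolynomial.pderiv i (MvPolynomial.pderiv l P)) x
          + polyC (MvPolynomial.pderiv l P) x * pdC (fun y => E y l) i x)
        - (E x j * polyC (MvPolynomial.pderiv i (MvPolynomial.pderiv i P)) x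
          + polyC (MvPolynomial.pderiv i P) x * pdC (fun y => E y j) i x) := by
    intro i
    have d1 := (hd P).fun_mul (hh i j)
    have d2 := (hE i).fun_mul (hd (MvPolynomial.pderiv j P))
    have d3 := fun l => (hE l).fun_mul (hd (MvPolynomial.pderiv l P))
    have d4 := (hE j).fun_mul (hd (MvPolynomial.pderiv i P))
    have d5 : DifferentiableAt ℝ
        (fun x => ∑ l, E x l * polyC (MvPolynomial.pderiv l P) x) x :=
      DifferentiableAt.fun_sum fun l _ => d3 l
    unfold momentField
    rw [pdC_sub ((d1.fun_sub d2).fun_add (d5.const_mul _)) d4,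
      pdC_add (d1.fun_sub d2) (d5.const_mul _), pdC_sub d1 d2, pdC_const_mul d5, pdC_sum _ d3,
      pdC_mul (hd P) (hh i j), pdC_mul (hE i) (hd _), pdC_mul (hE j) (hd _)]
    simp only [pdC_mul (hE _) (hd _), pdC_polyC]
  have e0 := congrFun hcE 0
  have e1 := congrFun hcE 1
  have e2 := congrFun hcE 2
  have c0 := congrFun hch 0
  have c1 := congrFun hch 1
  have c2 := congrFun hch 2
  simp only [curlC, Matrix.cons_val_zero, Matrix.cons_val_one, Matrix.cons_val] at e0 e1 e2 c0 c1 c2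
  simp only [key, polyC_sum]
  rw [Fin.sum_univ_three] at hdiv
  fin_cases j
  · simp [Fin.sum_univ_three, pdC_skewOfCurl, skewOfCurl, pderiv_pderiv_comm P 1 0,
      pderiv_pderiv_comm P 2 0]
    linear_combination -polyC P x * c0 + polyC (MvPolynomial.pderiv 1 P) x * e2
      - polyC (MvPolynomial.pderiv 2 P) x * e1 - polyC (MvPolynomial.pderiv 0 P) x * hdiv
  · simp [Fin.sum_univ_three, pdC_skewOfCurl, skewOfCurl, pderiv_pderiv_comm P 1 0,
      pderiv_pderiv_comm P 2 1]
    linear_combination -polyC P x * c1 + polyC (MvPolynomial.pderiv 2 P) x * e0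
      - polyC (MvPolynomial.pderiv 0 P) x * e2 - polyC (MvPolynomial.pderiv 1 P) x * hdiv
  · simp [Fin.sum_univ_three, pdC_skewOfCurl, skewOfCurl, pderiv_pderiv_comm P 2 0,
      pderiv_pderiv_comm P 2 1]
    linear_combination -polyC P x * c2 + polyC (MvPolynomial.pderiv 0 P) x * e1
      - polyC (MvPolynomial.pderiv 1 P) x * e0 - polyC (MvPolynomial.pderiv 2 P) x * hdiv

lemma sphInt_radial_momentField {I : Set ℝ} (hI : IsOpen I) {E h : E3 → Fin 3 → ℂ}
    (hE : ∀ i, ContDiffOn ℝ 1 (fun x => E x i) {x | ‖x‖ ∈ I})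
    (hcE : ∀ x, ‖x‖ ∈ I → curlC E x = h x)
    (hdiv : ∀ x, ‖x‖ ∈ I → ∑ i, pdC (fun y => E y i) i x = 0)
    {P : MvPolynomial (Fin 3) ℝ} {n : ℕ} (hP : P.IsHomogeneous n) (j : Fin 3)
    {r : ℝ} (hr : 0 < r) (hrI : r ∈ I) :
    (sphInt r fun x => ∑ i, (x i : ℂ) * momentField E h P j i x)
      = (sphInt r fun x => polyC P x * ∑ i, (x i : ℂ) * pdC (fun y => E y j) i x)
        - n * sphInt r fun x => polyC P x * E x j := by
  have hp : ∀ Q, ContDiffOn ℝ 1 (polyC Q) {x : E3 | ‖x‖ ∈ I} := fun Q =>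
    (contDiff_polyC Q).contDiffOn
  have hG := fun i => (hp P).mul (hE i)
  have hxc := fun i => (continuous_coord i).continuousOn (s := {x : E3 | ‖x‖ ∈ I})
  set ang : Fin 3 → E3 → ℂ := fun i x => (x j : ℂ) * pdC (fun y => polyC P y * E y i) i x
    - (x i : ℂ) * pdC (fun y => polyC P y * E y i) j x with hang
  have hangc : ∀ i, ContinuousOn (ang i) {x | ‖x‖ ∈ I} := fun i =>
    ((hxc j).mul (continuousOn_pdC hI (hG i) i)).sub
      ((hxc i).mul (continuousOn_pdC hI (hG i) j))
  have hsum : sphInt r (fun x => ∑ i, ang i x) = 0 := by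
    rw [sphInt_sum _ hangc hr.le hrI]
    exact Finset.sum_eq_zero fun i _ => sphInt_angular hI (hG i) hr hrI j i
  have hA : ContinuousOn (fun x => polyC P x * ∑ i, (x i : ℂ) * pdC (fun y => E y j) i x)
      {x | ‖x‖ ∈ I} := (hp P).continuousOn.mul (continuousOn_finsetSum _ fun i _ =>
        (hxc i).mul (continuousOn_pdC hI (hE j) i))
  have hB : ContinuousOn (fun x => -(n : ℂ) * (polyC P x * E x j)) {x | ‖x‖ ∈ I} :=
    continuousOn_const.mul (hG j).continuousOn
  rw [sub_eq_add_neg, ← neg_mul, ← sphInt_const_mul, ← sphInt_add hA hB hr.le hrI, ← add_zero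
    (sphInt r fun x => polyC P x * ∑ i, (x i : ℂ) * pdC (fun y => E y j) i x
      + -(n : ℂ) * (polyC P x * E x j)), ← hsum,
    ← sphInt_add (hA.fun_add hB) (continuousOn_finsetSum _ fun i _ => hangc i) hr.le hrI]
  refine sphInt_congr hr.le fun x hx => ?_
  have hxI : ‖x‖ ∈ I := hx ▸ hrI
  have hd : ∀ i, DifferentiableAt ℝ (fun y => E y i) x :=
    fun i => differentiableAt_of_norm_mem hI (hE i) hxI
  have hdp : DifferentiableAt ℝ (polyC P) x := (contDiff_polyC P (n := 1)).differentiable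
    one_ne_zero x
  have e0 := congrFun (hcE x hxI) 0
  have e1 := congrFun (hcE x hxI) 1
  have e2 := congrFun (hcE x hxI) 2
  simp only [curlC, Matrix.cons_val_zero, Matrix.cons_val_one, Matrix.cons_val] at e0 e1 e2
  have hd0 := hdiv x hxI
  have heul := sum_coord_mul_polyC_pderiv hP x
  rw [Fin.sum_univ_three] at hd0 heul
  simp only [hang, pdC_mul hdp (hd _), pdC_polyC, momentField]
  fin_cases j
  · simp [Fin.sum_univ_three, skewOfCurl]
    linear_combination polyC P x * (x 1 : ℂ) * e2 - polyC P x * (x 2 : ℂ) * e1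
      - polyC P x * (x 0 : ℂ) * hd0 - E x 0 * heul
  · simp [Fin.sum_univ_three, skewOfCurl]
    linear_combination polyC P x * (x 2 : ℂ) * e0 - polyC P x * (x 0 : ℂ) * e2
      - polyC P x * (x 1 : ℂ) * hd0 - E x 1 * heul
  · simp [Fin.sum_univ_three, skewOfCurl]
    linear_combination polyC P x * (x 0 : ℂ) * e1 - polyC P x * (x 1 : ℂ) * e0
      - polyC P x * (x 2 : ℂ) * hd0 - E x 2 * heul

lemma norm_sphInt_mul_le {J : Set ℝ} {f p : E3 → ℂ} (hf : ContinuousOn f {x | ‖x‖ ∈ J}) {r : ℝ}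
    (hr : 0 ≤ r) (hrJ : r ∈ J) {C : ℝ}
    (hC : ∀ θ : Metric.sphere (0 : E3) 1, ‖p (r • (θ : E3))‖ ≤ C) :
    ‖sphInt r fun x => p x * f x‖ ≤ C * ∫ θ : Metric.sphere (0 : E3) 1, ‖f (r • (θ : E3))‖
      ∂(volume : Measure E3).toSphere := by
  rw [← integral_const_mul]
  refine norm_integral_le_of_norm_le (integrable_sphere
    (continuous_const.mul (continuous_comp_smul_sphere hf hr hrJ).norm)) (ae_of_all _ fun θ => ?_)
  rw [norm_mul]
  exact mul_le_mul_of_nonneg_right (hC θ) (norm_nonneg _)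

lemma hasDerivAt_inv_ofReal_pow (n : ℕ) {r : ℝ} (hr : r ≠ 0) :
    HasDerivAt (fun s : ℝ => ((s : ℂ) ^ n)⁻¹) (-(n * (r : ℂ)⁻¹ * ((r : ℂ) ^ n)⁻¹)) r := by
  have hr' : (r : ℂ) ≠ 0 := by exact_mod_cast hr
  have h : HasDerivAt (fun s : ℝ => (s : ℂ)) 1 r := ofRealCLM.hasDerivAt
  refine ((h.fun_pow n).fun_inv (pow_ne_zero n hr')).congr_deriv ?_
  rcases n with - | n
  · simp
  · simp only [add_tsub_cancel_right, mul_one]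
    field_simp
    ring

/-- All polynomial moments of a decaying solution vanish. -/
lemma sphInt_polyC_mul_eq_zero {a k : ℝ} (ha : 0 < a) (hk : 0 < k) {E h : E3 → Fin 3 → ℂ}
    (hE : ∀ i, ContDiffOn ℝ 1 (fun x => E x i) {x | ‖x‖ ∈ Set.Ioi a})
    (hh : ∀ i, ContDiffOn ℝ 1 (fun x => h x i) {x | ‖x‖ ∈ Set.Ioi a})
    (hcE : ∀ x, ‖x‖ ∈ Set.Ioi a → curlC E x = h x)
    (hch : ∀ x, ‖x‖ ∈ Set.Ioi a → curlC h x = fun j => ((k ^ 2 : ℝ) : ℂ) * E x j)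
    (hdiv : ∀ x, ‖x‖ ∈ Set.Ioi a → ∑ i, pdC (fun y => E y i) i x = 0)
    (hlim : ∀ ε : ℝ, 0 < ε → ∃ R₀ : ℝ, ∀ r : ℝ, R₀ ≤ r → ∀ j,
      r * ∫ θ : Metric.sphere (0 : E3) 1, ‖E (r • (θ : E3)) j‖ ∂(volume : Measure E3).toSphere ≤ ε ∧
      r * ∫ θ : Metric.sphere (0 : E3) 1, ‖radC (fun x => E x j) (r • (θ : E3))‖
        ∂(volume : Measure E3).toSphere ≤ ε)
    (n : ℕ) {P : MvPolynomial (Fin 3) ℝ} (hP : P.IsHomogeneous n) (j : Fin 3) {r : ℝ}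
    (hr : a < r) : (sphInt r fun x => polyC P x * E x j) = 0 := by
  induction n using Nat.strong_induction_on generalizing P r with
  | _ n ih =>
  have hΔ : ∀ r, a < r → (sphInt r fun x =>
      polyC (∑ i, MvPolynomial.pderiv i (MvPolynomial.pderiv i P)) x * E x j) = 0 := by
    intro r hr
    rcases Nat.eq_zero_or_pos n with rfl | hn
    · have hc : P = MvPolynomial.C (P.coeff 0) := by
        rwa [← MvPolynomial.totalDegree_eq_zero_iff_eq_C,
          MvPolynomial.totalDegree_zero_iff_isHomogeneous]
      rw [hc]
      simp [polyC, sphInt]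
    · exact ih (n - 1 - 1) (by omega)
        (MvPolynomial.IsHomogeneous.sum _ _ _ fun i _ => hP.pderiv.pderiv) hr
  have hp : ∀ Q, ContDiffOn ℝ 1 (polyC Q) {x : E3 | ‖x‖ ∈ Set.Ioi a} := fun Q =>
    (contDiff_polyC Q).contDiffOn
  have hpE := fun i => (hp P).mul (hE i)
  have hxp : ContinuousOn (fun x : E3 => ∑ i, (x i : ℂ) * pdC (fun y => E y j) i x)
      {x | ‖x‖ ∈ Set.Ioi a} := continuousOn_finsetSum _ fun i _ =>
    (continuous_coord i).continuousOn.mul (continuousOn_pdC isOpen_Ioi (hE j) i)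
  have hdE : ∀ x, ‖x‖ ∈ Set.Ioi a → ∀ i, DifferentiableAt ℝ (fun y => E y i) x := fun x hx i =>
    differentiableAt_of_norm_mem isOpen_Ioi (hE i) hx
  set s : ℝ → ℂ := fun r => sphInt r fun x => polyC P x * E x j with hs
  set W : ℝ → ℂ := fun r => sphInt r fun x =>
    polyC P x * ∑ i, (x i : ℂ) * pdC (fun y => E y j) i x with hW
  set V : ℝ → ℂ := fun r => (r : ℂ) * sphInt r fun x => ∑ i, (x i : ℂ) * momentField E h P j i x
    with hV
  have hVW : ∀ r, a < r → V r = (r : ℂ) * (W r - n * s r) := fun r hr => by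
    rw [hV, hW, hs]
    simp only
    rw [sphInt_radial_momentField isOpen_Ioi hE hcE hdiv hP j (ha.trans hr) hr]
  have hs' : ∀ r, a < r → HasDerivAt s ((r : ℂ)⁻¹ * (W r + n * s r)) r := by
    intro r hr
    convert! hasDerivAt_sphInt isOpen_Ioi (hpE j) (ha.trans hr) hr using 2
    rw [hW, hs]
    simp only
    rw [← sphInt_const_mul, ← sphInt_add ((hp P).continuousOn.fun_mul hxp)
      (continuousOn_const.fun_mul (hpE j).continuousOn) (ha.trans hr).le hr]
    refine sphInt_congr (ha.trans hr).le fun x hx => ?_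
    simp only [pdC_mul ((contDiff_polyC P (n := 1)).differentiable one_ne_zero x)
      (hdE x (hx ▸ hr) j), pdC_polyC]
    rw [← mul_assoc, ← sum_coord_mul_polyC_pderiv hP x]
    simp only [Fin.sum_univ_three]
    ring
  have hV' : ∀ r, a < r → HasDerivAt V ((r : ℂ) ^ 2 * (-(((k ^ 2 : ℝ) : ℂ) * s r))) r := by
    intro r hr
    convert! hasDerivAt_flux isOpen_Ioi (fun i => contDiffOn_momentField hE hh P j i)
      (ha.trans hr) hr using 2
    rw [hs, ← sub_zero (-(_ : ℂ)), ← hΔ r hr, sub_eq_add_neg, ← neg_mul, ← sphInt_const_mul,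
      ← neg_one_mul (sphInt r _), ← sphInt_const_mul, ← sphInt_add
        (continuousOn_const.fun_mul (hpE j).continuousOn)
        (continuousOn_const.fun_mul ((hp _).continuousOn.fun_mul (hE j).continuousOn))
        (ha.trans hr).le hr]
    refine sphInt_congr (ha.trans hr).le fun x hx => ?_
    have hx' : ‖x‖ ∈ Set.Ioi a := hx ▸ hr
    rw [sum_pdC_momentField (hdE x hx') (fun i j => differentiableAt_of_norm_mem isOpen_Ioi
      (contDiffOn_skewOfCurl hh i j) hx') (hcE x hx') (hch x hx') (hdiv x hx')]
    ring
  have hu := fun r (hr : a < r) => hasDerivAt_inv_ofReal_pow n (ha.trans hr).ne'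
  have hid : ∀ r : ℝ, HasDerivAt (fun s : ℝ => (s : ℂ)) 1 r := fun r => ofRealCLM.hasDerivAt
  have hne : ∀ r, a < r → (r : ℂ) ≠ 0 := fun r hr => by exact_mod_cast (ha.trans hr).ne'
  have hg0 := eq_zero_of_ode_of_tendsto_zero ha hk (N := n * (n + 1)) (by positivity)
    (g := fun r => (r : ℂ) * ((r : ℂ) ^ n)⁻¹ * s r)
    (q := fun r => (1 + n) * (((r : ℂ) ^ n)⁻¹ * s r) + ((r : ℂ) ^ n)⁻¹ * ((r : ℂ)⁻¹ * V r))
    (fun r hr => ?_) (fun r hr => ?_) (fun ε hε => ?_) hr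
  · simpa [hne r hr] using hg0
  · convert! ((hid r).mul (hu r hr)).mul (hs' r hr) using 1
    simp only [Pi.mul_apply, hVW r hr]
    have := hne r hr
    field_simp
    ring
  · convert! (((hu r hr).mul (hs' r hr)).const_mul (1 + n : ℂ)).add
      ((hu r hr).mul ((by simpa using hasDerivAt_inv_ofReal_pow 1 (ha.trans hr).ne' :
        HasDerivAt (fun s : ℝ => (s : ℂ)⁻¹) (-((r : ℂ)⁻¹ * (r : ℂ)⁻¹)) r).mul (hV' r hr))) using 1
    simp only [Pi.mul_apply, hVW r hr]
    have := hne r hr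
    push_cast
    field_simp
    ring
  · obtain ⟨C, hC0, hC⟩ := exists_norm_polyC_le hP
    obtain ⟨R₀, hR₀⟩ := hlim (ε / (2 * C + 1)) (by positivity)
    refine ⟨max R₀ (a + 1), fun r hr => ?_⟩
    have hra : a < r := by linarith [(le_max_right _ _).trans hr]
    have hr1 : 1 ≤ r := by linarith [(le_max_right _ _).trans hr]
    have hr0 := ha.trans hra
    obtain ⟨h1, h2⟩ := hR₀ r ((le_max_left _ _).trans hr) j
    have hrn : 0 < r ^ n := by positivity
    have hWr : W r = (r : ℂ) * sphInt r fun x => polyC P x * radC (fun x => E x j) x := by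
      rw [hW, ← sphInt_const_mul]
      refine sphInt_congr hr0.le fun x hx => ?_
      rw [radC, hx]
      have := hne r hra
      field_simp
    have hunorm : ‖((r : ℂ) ^ n)⁻¹‖ = (r ^ n)⁻¹ := by
      rw [norm_inv, norm_pow, norm_real, Real.norm_of_nonneg hr0.le]
    have hrnorm : ‖(r : ℂ)‖ = r := by rw [norm_real, Real.norm_of_nonneg hr0.le]
    have b1 := norm_sphInt_mul_le (p := polyC P) (hE j).continuousOn hr0.le hra (hC r hr0.le)
    have b2 := norm_sphInt_mul_le (p := polyC P) (continuousOn_radC isOpen_Ioi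
      (fun s hs => ha.trans hs) (hE j)) hr0.le hra (hC r hr0.le)
    set e := ∫ θ : Metric.sphere (0 : E3) 1, ‖E (r • (θ : E3)) j‖ ∂(volume : Measure E3).toSphere
    set d := ∫ θ : Metric.sphere (0 : E3) 1, ‖radC (fun x => E x j) (r • (θ : E3))‖
        ∂(volume : Measure E3).toSphere
    have he0 : 0 ≤ e := integral_nonneg fun _ => norm_nonneg _
    have hus : ‖((r : ℂ) ^ n)⁻¹ * s r‖ ≤ C * e := by
      rw [norm_mul, hunorm, inv_mul_le_iff₀ hrn]
      linarith
    have huW : ‖((r : ℂ) ^ n)⁻¹ * W r‖ ≤ C * (r * d) := by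
      rw [norm_mul, hunorm, inv_mul_le_iff₀ hrn, hWr, norm_mul, hrnorm]
      nlinarith
    have hfin : C * (r * e) + C * (r * d) ≤ ε := by
      have h3 : C * (r * e) + C * (r * d) ≤ 2 * C * (ε / (2 * C + 1)) := by nlinarith
      refine h3.trans ?_
      rw [mul_div_assoc', div_le_iff₀ (by positivity)]
      nlinarith
    have hd0 : 0 ≤ C * (r * d) := (norm_nonneg _).trans huW
    have he1 : C * e ≤ C * (r * e) := by
      gcongr
      nlinarith
    constructor
    · rw [mul_assoc, norm_mul, hrnorm]
      nlinarith
    · have : (1 + n) * (((r : ℂ) ^ n)⁻¹ * s r) + ((r : ℂ) ^ n)⁻¹ * ((r : ℂ)⁻¹ * V r)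
          = ((r : ℂ) ^ n)⁻¹ * s r + ((r : ℂ) ^ n)⁻¹ * W r := by
        rw [hVW r hra]
        have := hne r hra
        field_simp
        ring
      simp only [this]
      exact (norm_add_le _ _).trans (by linarith)

lemma sphInt_polyC_mul_eq_zero_of_homogeneous {J : Set ℝ} {f : E3 → ℂ}
    (hf : ContinuousOn f {x | ‖x‖ ∈ J}) {r : ℝ} (hr : 0 ≤ r) (hrJ : r ∈ J)
    (h : ∀ (n : ℕ) (P : MvPolynomial (Fin 3) ℝ), P.IsHomogeneous n →
      (sphInt r fun x => polyC P x * f x) = 0) (P : MvPolynomial (Fin 3) ℝ) :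
    (sphInt r fun x => polyC P x * f x) = 0 := by
  have hP : (sphInt r fun x => polyC P x * f x) =
      sphInt r fun x => ∑ n ∈ Finset.range (P.totalDegree + 1),
        polyC (MvPolynomial.homogeneousComponent n P) x * f x := by
    refine sphInt_congr hr fun x _ => ?_
    rw [← Finset.sum_mul, ← polyC_sum, MvPolynomial.sum_homogeneousComponent]
  have hc : ∀ Q, ContinuousOn (fun x => polyC Q x * f x) {x | ‖x‖ ∈ J} := fun Q =>
    (contDiff_polyC Q (n := 1)).continuous.continuousOn.mul hf
  rw [hP]
  unfold sphInt
  rw [integral_finsetSum _ fun n _ =>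
    integrable_sphere (continuous_comp_smul_sphere (hc _) hr hrJ)]
  exact Finset.sum_eq_zero fun n _ =>
    h n _ (MvPolynomial.homogeneousComponent_isHomogeneous n P)

/-- A continuous function on a sphere all of whose polynomial moments vanish is zero. -/
lemma eq_zero_of_sphInt_polyC_mul_eq_zero {J : Set ℝ} {f : E3 → ℂ}
    (hf : ContinuousOn f {x | ‖x‖ ∈ J}) {r : ℝ} (hr : 0 < r) (hrJ : r ∈ J)
    (h : ∀ P : MvPolynomial (Fin 3) ℝ, (sphInt r fun x => polyC P x * f x) = 0) {x : E3}
    (hx : ‖x‖ = r) : f x = 0 := by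
  set S := Metric.sphere (0 : E3) 1
  have hfc := continuous_comp_smul_sphere hf hr.le hrJ
  let φ : MvPolynomial (Fin 3) ℝ →ₐ[ℝ] C(S, ℝ) :=
    MvPolynomial.aeval fun i => ⟨fun θ => r * (θ : E3) i, by fun_prop⟩
  have hφ : ∀ P θ, φ P θ = MvPolynomial.eval (fun i => (r • (θ : E3)) i) P := by
    intro P θ
    induction P using MvPolynomial.induction_on with
    | C c => simp [φ]
    | add P Q hP hQ => simp only [map_add, ContinuousMap.add_apply, hP, hQ]
    | mul_X P i hP => simp only [map_mul, ContinuousMap.mul_apply, hP]; simp [φ]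
  have hsep : φ.range.SeparatesPoints := by
    intro θ₁ θ₂ hne
    by_contra! hcon
    refine hne (Subtype.ext (PiLp.ext fun i => ?_))
    have := hcon _ ⟨φ (MvPolynomial.X i), ⟨MvPolynomial.X i, rfl⟩, rfl⟩
    simpa [φ, hr.ne'] using this
  have hdense := ContinuousMap.subalgebra_topologicalClosure_eq_top_of_separatesPoints φ.range hsep
  have hall : ∀ p : C(S, ℝ), ∫ θ, (p θ : ℂ) * f (r • (θ : E3)) ∂(volume : Measure E3).toSphere
      = 0 := by
    have hcl : IsClosed {p : C(S, ℝ) | ∫ θ, (p θ : ℂ) * f (r • (θ : E3))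
        ∂(volume : Measure E3).toSphere = 0} := by
      refine isClosed_eq (continuous_iff_continuousAt.2 fun p => ?_) continuous_const
      refine continuousAt_of_dominated (bound := fun θ => (‖p‖ + 1) * ‖f (r • (θ : E3))‖)
        (.of_forall fun q => ((continuous_ofReal.comp q.continuous).mul
          hfc).aestronglyMeasurable) ?_ (integrable_sphere (continuous_const.mul hfc.norm))
        (ae_of_all _ fun θ => ?_)
      · filter_upwards [Metric.ball_mem_nhds p one_pos] with q hq
        refine ae_of_all _ fun θ => ?_
        rw [norm_mul, norm_real]
        gcongr
        refine (q.norm_coe_le_norm θ).trans ?_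
        have := norm_sub_norm_le q p
        rw [Metric.mem_ball, dist_eq_norm] at hq
        linarith
      · have : Continuous fun q : C(S, ℝ) => q θ := continuous_eval_const θ
        exact ((continuous_ofReal.comp this).mul continuous_const).continuousAt
    intro p
    have hp : p ∈ φ.range.topologicalClosure := hdense ▸ Algebra.mem_top
    refine closure_minimal ?_ hcl hp
    rintro _ ⟨P, rfl⟩
    refine (integral_congr_ae (ae_of_all _ fun θ => ?_)).trans (h P)
    simp only [polyC]
    rw [← hφ]
    rfl
  have hconj : ∫ θ, ‖f (r • (θ : E3))‖ ^ 2 ∂(volume : Measure E3).toSphere = 0 := by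
    have h1 := hall ⟨_, continuous_re.comp hfc⟩
    have h2 := hall ⟨_, continuous_im.comp hfc⟩
    have h3 : ∫ θ : S, (((f (r • (θ : E3))).re : ℂ) * f (r • (θ : E3)) +
        -I * (((f (r • (θ : E3))).im : ℂ) * f (r • (θ : E3))))
        ∂(volume : Measure E3).toSphere = 0 := by
      have hcre : Continuous fun θ : S => (((f (r • (θ : E3))).re : ℂ) * f (r • (θ : E3))) :=
        (continuous_ofReal.comp (continuous_re.comp hfc)).mul hfc
      have hcim : Continuous fun θ : S => (((f (r • (θ : E3))).im : ℂ) * f (r • (θ : E3))) :=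
        (continuous_ofReal.comp (continuous_im.comp hfc)).mul hfc
      rw [integral_add (integrable_sphere hcre)
        (integrable_sphere (continuous_const.fun_mul hcim)), integral_const_mul]
      simp only [ContinuousMap.coe_mk, Function.comp_apply] at h1 h2
      rw [h1, h2]
      simp
    rw [← ofReal_eq_zero, ← integral_complex_ofReal, ← h3]
    refine integral_congr_ae (ae_of_all _ fun θ => ?_)
    have hz : ∀ z : ℂ, ((‖z‖ ^ 2 : ℝ) : ℂ) = (z.re : ℂ) * z + -I * ((z.im : ℂ) * z) := fun z => by
      rw [← normSq_eq_norm_sq]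
      apply Complex.ext <;> simp [normSq_apply]
      ring
    exact hz _
  have hcont : Continuous fun θ : S => ‖f (r • (θ : E3))‖ ^ 2 := hfc.norm.pow 2
  obtain ⟨θ, hθ⟩ : ∃ θ : S, r • (θ : E3) = x := by
    refine ⟨⟨r⁻¹ • x, ?_⟩, smul_inv_smul₀ hr.ne' x⟩
    simp [norm_smul, hx, hr.ne', abs_of_pos hr, S]
  have hz := (hcont.ae_eq_iff_eq (volume : Measure E3).toSphere continuous_const).1
    ((integral_eq_zero_iff_of_nonneg (fun θ => by positivity) (integrable_sphere hcont)).1 hconj)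
  have hz' : ‖f (r • (θ : E3))‖ ^ 2 = 0 := congrFun hz θ
  simpa [hθ] using hz'

lemma radialDeriv_apply {F : E3 → Fin 3 → ℂ} {x : E3} (hF : DifferentiableAt ℝ F x) (j : Fin 3) :
    radialDeriv F x j = radC (fun y => F y j) x := by
  rw [radialDeriv, radC, ← fderiv_eq_sum_pdC, (hasFDerivAt_pi'.1 hF.hasFDerivAt j).fderiv, map_smul]
  simp

/-- A continuous field vanishing for `a < ‖x‖` vanishes on the sphere `‖x‖ = a`. -/
lemma eq_zero_of_eq_zero_exterior {a : ℝ} (ha : 0 < a) {F : E3 → Fin 3 → ℂ}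
    (hF : ContinuousOn F {x | a ≤ ‖x‖}) (h0 : ∀ x, a < ‖x‖ → F x = 0) {x : E3} (hx : a ≤ ‖x‖) :
    F x = 0 := by
  have hT : Filter.Tendsto (fun t : ℝ => t • x) (nhdsWithin 1 (Set.Ioi 1))
      (nhdsWithin x {x | a ≤ ‖x‖}) := by
    refine tendsto_nhdsWithin_iff.2 ⟨?_, ?_⟩
    · have : Filter.Tendsto (fun t : ℝ => t • x) (nhds 1) (nhds ((1 : ℝ) • x)) :=
        (continuous_id.smul continuous_const).tendsto 1
      rw [one_smul] at this
      exact this.mono_left nhdsWithin_le_nhds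
    · filter_upwards [self_mem_nhdsWithin] with t ht
      have ht' : (1 : ℝ) < t := ht
      simp only [norm_smul, Real.norm_of_nonneg (zero_le_one.trans ht'.le)]
      nlinarith [norm_nonneg x]
  refine tendsto_nhds_unique ((hF x hx).tendsto.comp hT) ?_
  refine tendsto_const_nhds.congr' ?_
  filter_upwards [self_mem_nhdsWithin] with t ht
  have ht' : (1 : ℝ) < t := ht
  refine (h0 _ ?_).symm
  rw [norm_smul, Real.norm_of_nonneg (zero_le_one.trans ht'.le)]
  nlinarith [norm_nonneg x]

theorem uniqueness_exterior_impedance_maxwell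
    (a ω ε₀ μ₀ : ℝ) (ha : 0 < a) (hω : 0 < ω) (hε₀ : 0 < ε₀) (hμ₀ : 0 < μ₀)
    (k : ℝ) (hk : k = ω * Real.sqrt (ε₀ * μ₀))
    (ζ : ℂ) (hζre : 0 ≤ ζ.re) (hζ0 : ζ ≠ 0)
    (E H : E3 → Fin 3 → ℂ)
    (hEcont : ContinuousOn E {x : E3 | a ≤ ‖x‖})
    (hHcont : ContinuousOn H {x : E3 | a ≤ ‖x‖})
    (hEC1 : ContDiffOn ℝ 1 E {x : E3 | a < ‖x‖})
    (hHC1 : ContDiffOn ℝ 1 H {x : E3 | a < ‖x‖})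
    -- Maxwell's equations in the exterior of the ball:
    (hME : ∀ x : E3, a < ‖x‖ →
      curlC E x = fun j => Complex.I * (ω : ℂ) * (μ₀ : ℂ) * H x j)
    (hMH : ∀ x : E3, a < ‖x‖ →
      curlC H x = fun j => -(Complex.I * (ω : ℂ) * (ε₀ : ℂ) * E x j))
    -- Impedance boundary condition N × (E × N) = ζ (N × H) on the sphere |x| = a,
    -- with outward unit normal N = x/a:
    (hbc : ∀ x : E3, ‖x‖ = a →
      crossC (fun j => ((a⁻¹ * x j : ℝ) : ℂ))
          (crossC (E x) (fun j => ((a⁻¹ * x j : ℝ) : ℂ)))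
        = fun j => ζ * crossC (fun j => ((a⁻¹ * x j : ℝ) : ℂ)) (H x) j)
    -- Sommerfeld radiation conditions: sup_{|x|=R} ‖R(∂F/∂r − ikF)‖ → 0 as R → ∞
    (hradE : ∀ ε : ℝ, 0 < ε → ∃ R₀ : ℝ, ∀ R : ℝ, R₀ ≤ R → ∀ x : E3, ‖x‖ = R →
      ‖(R : ℝ) • (radialDeriv E x - fun j => Complex.I * (k : ℂ) * E x j)‖ ≤ ε)
    (hradH : ∀ ε : ℝ, 0 < ε → ∃ R₀ : ℝ, ∀ R : ℝ, R₀ ≤ R → ∀ x : E3, ‖x‖ = R →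
      ‖(R : ℝ) • (radialDeriv H x - fun j => Complex.I * (k : ℂ) * H x j)‖ ≤ ε) :
    ∀ x : E3, a ≤ ‖x‖ → E x = 0 ∧ H x = 0 := by
  have hE1 : ∀ i, ContDiffOn ℝ 1 (fun x => E x i) {x | ‖x‖ ∈ Set.Ioi a} :=
    contDiffOn_pi.1 hEC1
  have hH1 : ∀ i, ContDiffOn ℝ 1 (fun x => H x i) {x | ‖x‖ ∈ Set.Ioi a} :=
    contDiffOn_pi.1 hHC1
  have hα : 0 < ω * μ₀ := mul_pos hω hμ₀
  have hβ : 0 < ω * ε₀ := mul_pos hω hε₀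
  have hk0 : 0 < k := hk ▸ mul_pos hω (Real.sqrt_pos.2 (mul_pos hε₀ hμ₀))
  have hk2 : k ^ 2 = (ω * μ₀) * (ω * ε₀) := by
    rw [hk, mul_pow, Real.sq_sqrt (mul_pos hε₀ hμ₀).le]
    ring
  have hME' : ∀ x : E3, a < ‖x‖ → curlC E x = fun j => I * ((ω * μ₀ : ℝ) : ℂ) * H x j :=
    fun x hx => by rw [hME x hx]; ext j; push_cast; ring
  have hMH' : ∀ x : E3, a < ‖x‖ → curlC H x = fun j => -(I * ((ω * ε₀ : ℝ) : ℂ) * E x j) :=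
    fun x hx => by rw [hMH x hx]; ext j; push_cast; ring
  have hα0 : I * ((ω * μ₀ : ℝ) : ℂ) ≠ 0 := mul_ne_zero I_ne_zero (by exact_mod_cast hα.ne')
  have hβ0 : -(I * ((ω * ε₀ : ℝ) : ℂ)) ≠ 0 :=
    neg_ne_zero.2 (mul_ne_zero I_ne_zero (by exact_mod_cast hβ.ne'))
  have hdE : ∀ x, a < ‖x‖ → ∀ i, DifferentiableAt ℝ (fun y => E y i) x := fun x hx i =>
    differentiableAt_of_norm_mem isOpen_Ioi (hE1 i) hx
  have hdH : ∀ x, a < ‖x‖ → ∀ i, DifferentiableAt ℝ (fun y => H y i) x := fun x hx i =>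
    differentiableAt_of_norm_mem isOpen_Ioi (hH1 i) hx
  have hdiv : ∀ x, ‖x‖ ∈ Set.Ioi a → ∑ i, pdC (fun y => E y i) i x = 0 := by
    intro x hx
    have h := div_curl_eq_zero (F := fun i x => -(I * ((ω * ε₀ : ℝ) : ℂ)) * E x i) hH1
      (fun i => contDiffOn_const.mul (hE1 i))
      (fun x hx j => by rw [hMH' x hx]; exact neg_mul _ _) hx
    simp only [pdC_const_mul (hdE x hx _), ← Finset.mul_sum] at h
    exact (mul_eq_zero.1 h).resolve_left hβ0
  have him := fun r (hr : a < r) => im_sphInt_conj_mul_radial_nonpos ha hα hζre hEcont hHcont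
    hE1 hH1 hdiv hME' hMH' hbc hr
  have hrad : ∀ ε : ℝ, 0 < ε → ∃ R₀ : ℝ, ∀ R : ℝ, R₀ ≤ R → ∀ x : E3, ‖x‖ = R → ∀ j,
      R * ‖radC (fun x => E x j) x - I * (k : ℂ) * E x j‖ ≤ ε := by
    intro ε hε
    obtain ⟨R₀, hR₀⟩ := hradE ε hε
    refine ⟨max R₀ (a + 1), fun R hR x hx j => ?_⟩
    have hRa : a < R := by linarith [(le_max_right _ _).trans hR]
    have h := (norm_le_pi_norm _ j).trans (hR₀ R ((le_max_left _ _).trans hR) x hx)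
    rwa [Pi.smul_apply, norm_smul, Real.norm_of_nonneg (ha.trans hRa).le, Pi.sub_apply,
      radialDeriv_apply (differentiableAt_of_norm_mem isOpen_Ioi hEC1 (hx ▸ hRa))] at h
  have hcurl : ∀ x, ‖x‖ ∈ Set.Ioi a → curlC (fun x j => I * ((ω * μ₀ : ℝ) : ℂ) * H x j) x
      = fun j => ((k ^ 2 : ℝ) : ℂ) * E x j := by
    intro x hx
    have h : curlC (fun x j => I * ((ω * μ₀ : ℝ) : ℂ) * H x j) x
        = fun j => I * ((ω * μ₀ : ℝ) : ℂ) * curlC H x j := by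
      ext j
      fin_cases j <;> simp only [curlC, pdC_const_mul (hdH x hx _)] <;> simp <;> ring
    rw [h, hMH' x hx, hk2]
    ext j
    push_cast
    linear_combination (-(ω ^ 2 * μ₀ * ε₀ : ℂ) * E x j) * I_mul_I
  have hE0 : ∀ x, a < ‖x‖ → E x = 0 := fun x hx => funext fun j =>
    eq_zero_of_sphInt_polyC_mul_eq_zero (hE1 j).continuousOn (ha.trans hx) hx
      (sphInt_polyC_mul_eq_zero_of_homogeneous (hE1 j).continuousOn (ha.trans hx).le hx
        fun n P hP => sphInt_polyC_mul_eq_zero ha hk0 hE1 (fun i => contDiffOn_const.mul (hH1 i))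
          hME' hcurl hdiv (fun ε hε => tendsto_mul_integral_norm ha hk0
            (E := fun j x => E x j) hE1 him hrad hε) n hP j hx) rfl
  have hH0 : ∀ x, a < ‖x‖ → H x = 0 := by
    intro x hx
    have hp : ∀ i j, pdC (fun y => E y i) j x = 0 := fun i j => by
      have : (fun y => E y i) =ᶠ[nhds x] fun _ => 0 := by
        filter_upwards [(isOpen_norm_mem isOpen_Ioi).mem_nhds hx] with y hy
        rw [hE0 y hy, Pi.zero_apply]
      rw [pdC, this.fderiv_eq]
      simp
    ext j
    have h := congrFun (hME' x hx) j
    have hc : curlC E x j = 0 := by fin_cases j <;> simp [curlC, hp]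
    exact (mul_eq_zero.1 (h.symm.trans hc)).resolve_left hα0
  exact fun x hx => ⟨eq_zero_of_eq_zero_exterior ha hEcont hE0 hx,
    eq_zero_of_eq_zero_exterior ha hHcont hH0 hx⟩

end
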